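/- arXiv:0902.0433 — 4 statements merged into one kernel-verified Lean document; each statement's English description precedes it below -/
import Mathlib

section
/- For every v ∈ Ω and every n ≥ 1 there exists exactly one strictly increasing sequence (cᵢ)_{i∈ℤ} of integers with c₀ ≤ 0 < c₁, tending to +∞ as i → +∞ and to −∞ as i → −∞, such that for every i ∈ ℤ either c_{i+1} − cᵢ = q_{n−1} and (v(cᵢ+1), …, v(c_{i+1})) = s_{n−1}, or c_{i+1} − cᵢ = qₙ and (v(cᵢ+1), …, v(c_{i+1})) = sₙ. (This is the unique (n−1, n)-partition of v.) -/
open scoped Classical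

noncomputable section

/-- The Gauss map. -/
def gaussMap (x : ℝ) : ℝ := Int.fract x⁻¹

/-- `pq α k` is the partial quotient `a_{k+1}` of the continued fraction of `α`. -/
def pq (α : ℝ) (k : ℕ) : ℕ := ⌊(gaussMap^[k] α)⁻¹⌋₊

/-- `qd α (n+1)` is the convergent denominator `q_n`; `qd α 0 = q_{-1} = 0`, `qd α 1 = q₀ = 1`. -/
def qd (α : ℝ) : ℕ → ℕ
  | 0 => 0
  | 1 => 1
  | (n+2) => pq α n * qd α (n+1) + qd α n

/-- The circle map sequence of rotation number `α` (value `true` means letter `1`). -/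
def v0 (α : ℝ) (n : ℤ) : Bool := decide (1 - α ≤ Int.fract ((n : ℝ) * α))

/-- The word `(v₀(m+1), …, v₀(m+n))`. -/
def word (α : ℝ) (m n : ℕ) : List Bool :=
  (List.range n).map (fun i => v0 α ((m : ℤ) + 1 + i))

/-- `w` is a factor (admissible word) of `v₀`. -/
def IsFactor (α : ℝ) (w : List Bool) : Prop := ∃ m : ℕ, w = word α m w.length

/-- `w` occurs as a subword of the prefix `(v₀(1), …, v₀(N))`. -/
def OccursIn (α : ℝ) (w : List Bool) (N : ℕ) : Prop :=
  ∃ m : ℕ, m + w.length ≤ N ∧ w = word α m w.length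

/-- `exhaust α n` is `f(n)`: the least `N` such that every factor of length `n`
occurs in `(v₀(1), …, v₀(N))`. -/
def exhaust (α : ℝ) (n : ℕ) : ℕ :=
  sInf {N | ∀ w : List Bool, w.length = n → IsFactor α w → OccursIn α w N}

/-- number of occurrences of `w` in the prefix `(v₀(1), …, v₀(N))`. -/
def occCount (α : ℝ) (w : List Bool) (N : ℕ) : ℕ :=
  ((Finset.range N).filter (fun m => m + w.length ≤ N ∧ word α m w.length = w)).card

/-- the word `(v(m), v(m+1), …, v(m+n-1))` of a two-sided sequence. -/
def wordAt (v : ℤ → Bool) (m : ℤ) (n : ℕ) : List Bool :=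
  (List.range n).map (fun i => v (m + i))

/-- the hull `Ω`: closure of the set of translates of `v₀`. -/
def hull (α : ℝ) : Set (ℤ → Bool) :=
  closure {u | ∃ m : ℤ, u = fun n => v0 α (n - m)}


/-- `sw α (n+1)` is the word `sₙ`: `sw α 0 = s₋₁ = 1`, `sw α 1 = s₀ = 0`,
`sw α 2 = s₁ = s₀^{a₁-1} s₋₁`, and `s_{n+1} = sₙ^{a_{n+1}} s_{n-1}`. -/
def sw (α : ℝ) : ℕ → List Bool
  | 0 => [true]
  | 1 => [false]
  | 2 => (List.replicate (pq α 0 - 1) [false]).flatten ++ [true]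
  | (n+3) => (List.replicate (pq α (n+1)) (sw α (n+2))).flatten ++ sw α (n+1)

/-- The block of the partition `c` starting at index `i` is the word `s_{lev - 1}`
(of length `q_{lev-1} = qd α lev`), occupying sites `c i + 1, …, c (i+1)` of `v`. -/
def BlockIs (α : ℝ) (v : ℤ → Bool) (c : ℤ → ℤ) (i : ℤ) (lev : ℕ) : Prop :=
  c (i + 1) - c i = (qd α lev : ℤ) ∧ wordAt v (c i + 1) (qd α lev) = sw α lev

/-- `c` is an `(n-1, n)`-partition of `v`: a strictly increasing two-sided sequence of
cut points, with `c 0 ≤ 0 < c 1`, tending to `±∞`, each of whose blocks is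
`s_{n-1}` or `sₙ`. -/
def IsPartition (α : ℝ) (v : ℤ → Bool) (n : ℕ) (c : ℤ → ℤ) : Prop :=
  StrictMono c ∧ c 0 ≤ 0 ∧ 0 < c 1 ∧
  Filter.Tendsto c Filter.atTop Filter.atTop ∧
  Filter.Tendsto c Filter.atBot Filter.atBot ∧
  ∀ i : ℤ, BlockIs α v c i n ∨ BlockIs α v c i (n + 1)

/-!
At each level `n` the rotation by `α` induces on a short arc of the circle an exchange of two
intervals, and the return times cut `v₀` into two kinds of blocks, which are `s_{n-1}` and `sₙ`.
Inducing on the longer of the two intervals (one step of the Euclidean algorithm) glues each block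
of the other kind to the block before it; `a_{n+1}` such steps turn the pair `s_{n-1}, sₙ` into
the pair `sₙ, s_{n+1}`, and the process starts from the tiling of `v₀` by single letters.

Gluing is reversible: cutting the glued blocks of a tiling leads back, level by level, to the
tiling by single letters, which can be read off from the sequence. Hence in any tiling by `s_{n-1}`
and `sₙ` the cut points are determined by finite windows of the sequence. This gives uniqueness,
and also shows that the sequences which admit a tiling form a closed set. Since that set contains
the translates of `v₀`, it contains the hull.
-/

section Enumeration

theorem exists_apply_le_lt_apply_add_one {β : Type*} [LinearOrder β] {c : ℤ → β}
    (hc : Monotone c) (habove : ¬BddAbove (Set.range c)) (hbelow : ¬BddBelow (Set.range c))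
    (x : β) : ∃ i, c i ≤ x ∧ x < c (i + 1) := by
  obtain ⟨_, ⟨j, rfl⟩, hj⟩ := not_bddAbove_iff.1 habove x
  obtain ⟨_, ⟨i, rfl⟩, hi⟩ := not_bddBelow_iff.1 hbelow x
  obtain ⟨m, hm, hmax⟩ := Int.exists_greatest_of_bdd (P := fun i => c i ≤ x)
    ⟨j, fun i hi => (hc.reflect_lt (hi.trans_lt hj)).le⟩ ⟨i, hi.le⟩
  exact ⟨m, hm, lt_of_not_ge fun hle => (hmax _ hle).not_gt (lt_add_one m)⟩

theorem exists_strictMono_range_eq {C : Set ℤ} (habove : ¬BddAbove C) (hbelow : ¬BddBelow C) :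
    ∃ c : ℤ → ℤ, StrictMono c ∧ Set.range c = C ∧ c 0 ≤ 0 ∧ 0 < c 1 := by
  have : NoMaxOrder C := ⟨fun k =>
    let ⟨l, hl, hkl⟩ := not_bddAbove_iff.1 habove k
    ⟨⟨l, hl⟩, hkl⟩⟩
  have : NoMinOrder C := ⟨fun k =>
    let ⟨l, hl, hlk⟩ := not_bddBelow_iff.1 hbelow k
    ⟨⟨l, hl⟩, hlk⟩⟩
  have : Nonempty C := (nonempty_of_not_bddAbove habove).to_subtype
  let _ : SuccOrder C := LinearLocallyFiniteOrder.succOrder C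
  let _ : PredOrder C := LinearLocallyFiniteOrder.predOrder C
  let e : ℤ ≃o C := orderIsoIntOfLinearSuccPredArch.symm
  let c : ℤ → ℤ := fun i => e i
  have hc : StrictMono c := e.strictMono
  have hrange : Set.range c = C := by
    rw [← Subtype.range_coe (s := C)]
    exact e.surjective.range_comp Subtype.val
  obtain ⟨m, hm, hm'⟩ := exists_apply_le_lt_apply_add_one hc.monotone
    (hrange.symm ▸ habove) (hrange.symm ▸ hbelow) 0
  refine ⟨fun i => c (i + m), fun i j hij => hc (by omega), ?_, by simpa using hm,
    by simpa [add_comm] using hm'⟩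
  rw [← hrange]
  exact (Equiv.addRight m).surjective.range_comp c

theorem strictMono_eq_of_range_eq {c d : ℤ → ℤ} (hc : StrictMono c) (hd : StrictMono d)
    (hcd : Set.range c = Set.range d) (hc0 : c 0 ≤ 0) (hc1 : 0 < c 1) (hd0 : d 0 ≤ 0)
    (hd1 : 0 < d 1) : c = d := by
  let σ : ℤ ≃o ℤ := (hc.orderIso c).trans ((OrderIso.setCongr _ _ hcd).trans (hd.orderIso d).symm)
  have hσ : ∀ i, d (σ i) = c i := fun i =>
    congrArg Subtype.val ((hd.orderIso d).apply_symm_apply ⟨c i, hcd ▸ Set.mem_range_self i⟩)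
  have hsucc : ∀ i, σ (i + 1) = σ i + 1 := fun i => σ.map_succ i
  have hzero : σ 0 = 0 := by
    have hlt : σ 0 < 1 := hd.lt_iff_lt.1 ((hσ 0 ▸ hc0).trans_lt hd1)
    have hgt : 0 < σ (0 + 1) := hd.lt_iff_lt.1 (hd0.trans_lt (hσ (0 + 1) ▸ hc1))
    rw [hsucc] at hgt
    omega
  have hid : ∀ i, σ i = i := fun i => by
    induction i using Int.induction_on with
    | zero => exact hzero
    | succ i ih => rw [hsucc, ih]
    | pred i ih =>
      have := hsucc (-i - 1)
      rw [sub_add_cancel, ih] at this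
      omega
  exact funext fun i => by rw [← hσ, hid]

end Enumeration

section Words

-- Unfolding `wordAt` shows a map over `List.range n` coerced to a list of integers.
theorem wordAt_eq_map (v : ℤ → Bool) (m : ℤ) (n : ℕ) :
    wordAt v m n = (List.range n).map (fun i : ℕ => v (m + i)) := by
  simp [wordAt, ← List.map_eq_flatMap, Function.comp_def]

theorem length_wordAt (v : ℤ → Bool) (m : ℤ) (n : ℕ) : (wordAt v m n).length = n := by
  simp [wordAt_eq_map]

theorem wordAt_add (v : ℤ → Bool) (m : ℤ) (a b : ℕ) :
    wordAt v m (a + b) = wordAt v m a ++ wordAt v (m + a) b := by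
  simp [wordAt_eq_map, List.range_add, Function.comp_def, add_assoc]

theorem wordAt_append_eq_iff {v : ℤ → Bool} {m : ℤ} {X Y : List Bool} :
    wordAt v m (X ++ Y).length = X ++ Y ↔
      wordAt v m X.length = X ∧ wordAt v (m + X.length) Y.length = Y := by
  rw [List.length_append, wordAt_add]
  exact ⟨fun h => List.append_inj h (length_wordAt _ _ _), fun h => by rw [h.1, h.2]⟩

theorem wordAt_comp_sub (v : ℤ → Bool) (m k : ℤ) (n : ℕ) :
    wordAt (fun i => v (i - m)) k n = wordAt v (k - m) n := by
  simp only [wordAt_eq_map, add_sub_right_comm]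

theorem isClosed_setOf_wordAt_eq (m : ℤ) (n : ℕ) (w : List Bool) :
    IsClosed {v : ℤ → Bool | wordAt v m n = w} := by
  have hc : Continuous fun (v : ℤ → Bool) (i : Fin n) => v (m + (i : ℕ)) := by fun_prop
  convert (isClosed_discrete {f : Fin n → Bool | List.ofFn f = w}).preimage hc using 1
  ext v
  simp [wordAt_eq_map, List.ofFn_eq_map, ← List.map_coe_finRange_eq_range, Function.comp_def]

/-- The word `Wᵃ U`, the shape of the recursion for the words `sₙ`. -/
def powAppend (a : ℕ) (W U : List Bool) : List Bool := (List.replicate a W).flatten ++ U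

@[simp]
theorem powAppend_zero (W U : List Bool) : powAppend 0 W U = U := by
  simp [powAppend]

theorem powAppend_succ (a : ℕ) (W U : List Bool) :
    powAppend (a + 1) W U = W ++ powAppend a W U := by
  simp [powAppend, List.replicate_succ]

theorem length_powAppend (a : ℕ) (W U : List Bool) :
    (powAppend a W U).length = a * W.length + U.length := by
  simp [powAppend]

end Words

/-- `A` and `B` are the sets of cut points of a tiling of the two-sided sequence `v` by the words
`U` and `W`: a cut point `k ∈ A` carries the word `U` and a cut point `k ∈ B` the word `W`,
written on the sites `k + 1, k + 2, …` as in `BlockIs`. -/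
structure Tiling (v : ℤ → Bool) (U W : List Bool) (A B : Set ℤ) : Prop where
  wordAt_left : ∀ k ∈ A, wordAt v (k + 1) U.length = U
  wordAt_right : ∀ k ∈ B, wordAt v (k + 1) W.length = W
  cover : ∀ x, (∃ k ∈ A, x ∈ Set.Ico k (k + U.length)) ∨ ∃ k ∈ B, x ∈ Set.Ico k (k + W.length)
  disjoint : Disjoint A B
  left_add_le : ∀ k ∈ A, ∀ l ∈ A ∪ B, k < l → k + U.length ≤ l
  right_add_le : ∀ k ∈ B, ∀ l ∈ A ∪ B, k < l → k + W.length ≤ l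

namespace Tiling

variable {v : ℤ → Bool} {U W : List Bool} {A B : Set ℤ}

theorem symm (h : Tiling v U W A B) : Tiling v W U B A where
  wordAt_left := h.wordAt_right
  wordAt_right := h.wordAt_left
  cover x := (h.cover x).symm
  disjoint := h.disjoint.symm
  left_add_le := by simpa only [Set.union_comm B A] using h.right_add_le
  right_add_le := by simpa only [Set.union_comm B A] using h.left_add_le

theorem translate (h : Tiling v U W A B) (m : ℤ) :
    Tiling (fun n => v (n - m)) U W {k | k - m ∈ A} {k | k - m ∈ B} where
  wordAt_left k hk := by
    rw [wordAt_comp_sub, add_sub_right_comm]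
    exact h.wordAt_left _ hk
  wordAt_right k hk := by
    rw [wordAt_comp_sub, add_sub_right_comm]
    exact h.wordAt_right _ hk
  cover x := by
    rcases h.cover (x - m) with ⟨k, hk, hkx, hxk⟩ | ⟨k, hk, hkx, hxk⟩
    · exact .inl ⟨k + m, by simpa using hk, by omega, by omega⟩
    · exact .inr ⟨k + m, by simpa using hk, by omega, by omega⟩
  disjoint := h.disjoint.preimage fun k => k - m
  left_add_le k hk l hl hkl := by
    have := h.left_add_le (k - m) hk (l - m) hl (by omega)
    omega
  right_add_le k hk l hl hkl := by
    have := h.right_add_le (k - m) hk (l - m) hl (by omega)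
    omega

theorem singletons (v : ℤ → Bool) :
    Tiling v [true] [false] {k | v (k + 1) = true} {k | v (k + 1) = false} where
  wordAt_left k hk := by simpa [wordAt_eq_map] using hk
  wordAt_right k hk := by simpa [wordAt_eq_map] using hk
  cover x := by cases hx : v (x + 1) <;> [right; left] <;> exact ⟨x, hx, by simp⟩
  disjoint := Set.disjoint_left.2 fun k hk hk' => by simp_all
  left_add_le _ _ _ _ hkl := hkl
  right_add_le _ _ _ _ hkl := hkl

theorem merge (h : Tiling v U W A B) (hprev : ∀ k : ℤ, k + W.length ∈ A → k ∈ B) :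
    Tiling v (W ++ U) W {k | k + W.length ∈ A} {k | k ∈ B ∧ k + W.length ∉ A} where
  wordAt_left k hk := by
    rw [wordAt_append_eq_iff, add_right_comm]
    exact ⟨h.wordAt_right k (hprev k hk), h.wordAt_left _ hk⟩
  wordAt_right k hk := h.wordAt_right k hk.1
  cover x := by
    simp only [List.length_append, Nat.cast_add]
    rcases h.cover x with ⟨k, hk, hkx, hxk⟩ | ⟨k, hk, hkx, hxk⟩
    · exact .inl ⟨k - W.length, by simpa using hk, by omega, by omega⟩
    · by_cases hkA : k + W.length ∈ A
      · exact .inl ⟨k, hkA, hkx, by omega⟩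
      · exact .inr ⟨k, ⟨hk, hkA⟩, hkx, hxk⟩
  disjoint := Set.disjoint_left.2 fun k hk hk' => hk'.2 hk
  left_add_le k hk l hl hkl := by
    have hlB : l ∈ B := hl.elim (hprev l) And.left
    have hle := h.right_add_le k (hprev k hk) l (.inr hlB) hkl
    have hne : k + W.length ≠ l := h.disjoint.ne_of_mem hk hlB
    have := h.left_add_le _ hk l (.inr hlB) (by omega)
    simp only [List.length_append, Nat.cast_add]
    omega
  right_add_le k hk l hl hkl := h.right_add_le k hk.1 l (.inr (hl.elim (hprev l) And.left)) hkl

theorem split (hU : U ≠ []) (hW : W ≠ []) (h : Tiling v (W ++ U) W A B) :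
    Tiling v U W {k | k - W.length ∈ A} (A ∪ B) := by
  have hU := List.length_pos_iff.2 hU
  have hW := List.length_pos_iff.2 hW
  have hlen : ((W ++ U).length : ℤ) = W.length + U.length := by simp
  refine ⟨fun k hk => ?_, fun k hk => hk.elim (fun hk => ?_) (h.wordAt_right k), fun x => ?_,
    Set.disjoint_left.2 fun k hk hk' => ?_, fun k hk l hl hkl => ?_, fun k hk l hl hkl => ?_⟩
  · convert (wordAt_append_eq_iff.1 (h.wordAt_left _ hk)).2 using 2
    ring
  · exact (wordAt_append_eq_iff.1 (h.wordAt_left k hk)).1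
  · rcases h.cover x with ⟨k, hk, hkx, hxk⟩ | ⟨k, hk, hx⟩
    · rcases lt_or_ge x (k + W.length) with hx | hx
      · exact .inr ⟨k, .inl hk, hkx, hx⟩
      · exact .inl ⟨k + W.length, by simpa using hk, hx, by omega⟩
    · exact .inr ⟨k, .inr hk, hx⟩
  · have := h.left_add_le _ hk k hk' (by omega)
    omega
  · rcases hl with hl | hl
    · have := h.left_add_le _ hk _ (.inl hl) (by omega)
      omega
    · have := h.left_add_le _ hk l hl (by omega)
      omega
  · rcases hl with hl | hl
    · have hkl' : k ≤ l - W.length := by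
        by_contra! hlk
        have := h.left_add_le _ hl k hk hlk
        omega
      omega
    · rcases hk with hk | hk
      · have := h.left_add_le k hk l hl hkl
        omega
      · exact h.right_add_le k hk l hl hkl

theorem not_bddAbove (h : Tiling v U W A B) : ¬BddAbove (A ∪ B) := by
  refine not_bddAbove_iff.2 fun x => ?_
  rcases h.cover (x + U.length + W.length) with ⟨k, hk, -, hxk⟩ | ⟨k, hk, -, hxk⟩
  · exact ⟨k, .inl hk, by omega⟩
  · exact ⟨k, .inr hk, by omega⟩

theorem not_bddBelow (h : Tiling v U W A B) : ¬BddBelow (A ∪ B) := by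
  refine not_bddBelow_iff.2 fun x => ?_
  rcases h.cover (x - 1) with ⟨k, hk, hkx, -⟩ | ⟨k, hk, hkx, -⟩
  · exact ⟨k, .inl hk, by omega⟩
  · exact ⟨k, .inr hk, by omega⟩

theorem add_length_mem (h : Tiling v U W A B) (hU : U ≠ []) {k : ℤ} (hk : k ∈ A) :
    k + U.length ∈ A ∪ B := by
  have hU := List.length_pos_iff.2 hU
  rcases h.cover (k + U.length) with ⟨l, hl, hlk, hkl⟩ | ⟨l, hl, hlk, hkl⟩
  · have hkl' : k < l := by omega
    have := h.left_add_le k hk l (.inl hl) hkl'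
    exact .inl (by rwa [show k + U.length = l by omega])
  · have hkl' : k < l := by
      by_contra! hle
      have := h.right_add_le l hl k (.inl hk) (hle.lt_of_ne (h.disjoint.ne_of_mem hk hl).symm)
      omega
    have := h.left_add_le k hk l (.inr hl) hkl'
    exact .inr (by rwa [show k + U.length = l by omega])

end Tiling

section Recognizability

/-- A pair of words is recognizable if the cut points of a tiling by these words are
determined by the tiled sequence `v`, through rules (`k ∈ A v` and `k ∈ B v`) which only look
at finitely many sites of `v`, that is, which are clopen in `v`. The rules are defined on all
sequences, tiled or not. -/
def Recognizable (U W : List Bool) : Prop :=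
  ∃ A B : (ℤ → Bool) → Set ℤ, (∀ k, IsClopen {v | k ∈ A v}) ∧ (∀ k, IsClopen {v | k ∈ B v}) ∧
    ∀ v A' B', Tiling v U W A' B' → A' = A v ∧ B' = B v

variable {U W : List Bool}

namespace Recognizable

theorem symm (h : Recognizable U W) : Recognizable W U :=
  let ⟨A, B, hA, hB, h⟩ := h
  ⟨B, A, hB, hA, fun v A' B' hT => (h v B' A' hT.symm).symm⟩

theorem singletons : Recognizable [true] [false] := by
  refine ⟨fun v => {k | v (k + 1) = true}, fun v => {k | v (k + 1) = false},
    fun k => (isClopen_discrete {true}).preimage (continuous_apply (k + 1)),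
    fun k => (isClopen_discrete {false}).preimage (continuous_apply (k + 1)), fun v A B h => ?_⟩
  have hA : ∀ k ∈ A, v (k + 1) = true := fun k hk => by
    simpa [wordAt_eq_map] using h.wordAt_left k hk
  have hB : ∀ k ∈ B, v (k + 1) = false := fun k hk => by
    simpa [wordAt_eq_map] using h.wordAt_right k hk
  have hAB : ∀ k, k ∈ A ∨ k ∈ B := fun k => by
    simpa [Int.lt_add_one_iff, ← le_antisymm_iff] using h.cover k
  constructor <;> ext k <;> have := hA k <;> have := hB k <;> have := hAB k <;> grind

theorem merge (hU : U ≠ []) (hW : W ≠ []) (h : Recognizable U W) : Recognizable (W ++ U) W := by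
  obtain ⟨A, B, hA, hB, h⟩ := h
  refine ⟨fun v => {k | k + W.length ∈ A v}, fun v => {k | k ∈ B v ∧ k + W.length ∉ A v},
    fun k => hA _, fun k => (hB k).inter (hA _).compl, fun v A' B' hT => ?_⟩
  obtain ⟨hAv, hBv⟩ := h v _ _ (hT.split hU hW)
  beta_reduce
  rw [← hAv, ← hBv]
  have := Set.disjoint_left.1 hT.disjoint
  constructor <;> ext k <;> grind

theorem powAppend (hU : U ≠ []) (hW : W ≠ []) (h : Recognizable U W) (a : ℕ) :
    Recognizable (powAppend a W U) W := by
  induction a with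
  | zero => simpa using h
  | succ a ih =>
    rw [powAppend_succ]
    exact ih.merge (by simp [_root_.powAppend, hU]) hW

theorem eq_of_tiling (h : Recognizable U W) {v : ℤ → Bool} {A B A' B' : Set ℤ}
    (hT : Tiling v U W A B) (hT' : Tiling v U W A' B') : A = A' ∧ B = B' := by
  obtain ⟨_, _, -, -, h⟩ := h
  obtain ⟨rfl, rfl⟩ := h v A B hT
  obtain ⟨rfl, rfl⟩ := h v A' B' hT'
  exact ⟨rfl, rfl⟩

end Recognizable

theorem isClosed_setOf_exists_mem_Ico {X : Type*} [TopologicalSpace X] {A : X → Set ℤ}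
    (hA : ∀ k, IsClosed {v | k ∈ A v}) (x L : ℤ) :
    IsClosed {v | ∃ k ∈ A v, x ∈ Set.Ico k (k + L)} := by
  convert (Set.finite_Ioc (x - L) x).isClosed_biUnion fun k _ => hA k using 1
  ext v
  simp only [Set.mem_ofPred_eq, Set.mem_iUnion, Set.mem_Ico, Set.mem_Ioc, sub_lt_iff_lt_add,
    exists_prop]
  exact exists_congr fun k => by tauto

theorem isClosed_setOf_tiling {A B : (ℤ → Bool) → Set ℤ} (hA : ∀ k, IsClopen {v | k ∈ A v})
    (hB : ∀ k, IsClopen {v | k ∈ B v}) : IsClosed {v | Tiling v U W (A v) (B v)} := by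
  have hall : ∀ {P : ℤ → (ℤ → Bool) → Prop}, (∀ k, IsClosed {v | P k v}) →
      IsClosed {v | ∀ k, P k v} := fun h => by
    simpa only [Set.ofPred_forall] using isClosed_iInter h
  have hword : ∀ {C : (ℤ → Bool) → Set ℤ}, (∀ k, IsClopen {v | k ∈ C v}) → ∀ w : List Bool,
      IsClosed {v | ∀ k ∈ C v, wordAt v (k + 1) w.length = w} := fun hC w =>
    hall fun k => isClosed_imp (hC k).isOpen (isClosed_setOf_wordAt_eq _ _ _)
  have hsep : ∀ {C : (ℤ → Bool) → Set ℤ}, (∀ k, IsClopen {v | k ∈ C v}) → ∀ L : ℕ,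
      IsClosed {v | ∀ k ∈ C v, ∀ l ∈ A v ∪ B v, k < l → k + L ≤ l} := fun hC L =>
    hall fun k => isClosed_imp (hC k).isOpen <| hall fun l =>
      isClosed_imp ((hA l).isOpen.union (hB l).isOpen) isClosed_const
  have hcover : IsClosed {v | ∀ x, (∃ k ∈ A v, x ∈ Set.Ico k (k + U.length)) ∨
      ∃ k ∈ B v, x ∈ Set.Ico k (k + W.length)} := hall fun x =>
    (isClosed_setOf_exists_mem_Ico (fun k => (hA k).isClosed) x _).union
      (isClosed_setOf_exists_mem_Ico (fun k => (hB k).isClosed) x _)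
  have hdisj : IsClosed {v | Disjoint (A v) (B v)} := by
    simp only [Set.disjoint_left]
    exact hall fun k => isClosed_imp (hA k).isOpen (hB k).compl.isClosed
  convert (hword hA U).inter <| (hword hB W).inter <| hcover.inter <| hdisj.inter <|
    (hsep hA U.length).inter (hsep hB W.length) using 1
  ext v
  exact ⟨fun ⟨h₁, h₂, h₃, h₄, h₅, h₆⟩ => ⟨h₁, h₂, h₃, h₄, h₅, h₆⟩,
    fun ⟨h₁, h₂, h₃, h₄, h₅, h₆⟩ => ⟨h₁, h₂, h₃, h₄, h₅, h₆⟩⟩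

theorem Recognizable.isClosed_setOf_exists_tiling (h : Recognizable U W) :
    IsClosed {v | ∃ A B, Tiling v U W A B} := by
  obtain ⟨A, B, hA, hB, h⟩ := h
  convert isClosed_setOf_tiling (U := U) (W := W) hA hB using 1
  ext v
  refine ⟨fun ⟨A', B', hT⟩ => ?_, fun hT => ⟨_, _, hT⟩⟩
  obtain ⟨rfl, rfl⟩ := h v A' B' hT
  exact hT

end Recognizability

section IntervalExchange

/-- The image in the circle of the half-open interval `[lo, hi)`. -/
def arc (lo hi : ℝ) : Set UnitAddCircle := (↑) '' Set.Ico lo hi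

theorem add_mem_arc_iff {x : UnitAddCircle} {t lo hi : ℝ} :
    x + t ∈ arc lo hi ↔ x ∈ arc (lo - t) (hi - t) := by
  simp only [arc, ← Set.image_sub_const_Ico, Set.image_image, Set.mem_image, AddCircle.coe_sub,
    sub_eq_iff_eq_add]

theorem arc_subset_arc {lo hi lo' hi' : ℝ} (hlo : lo' ≤ lo) (hhi : hi ≤ hi') :
    arc lo hi ⊆ arc lo' hi' :=
  Set.image_mono (Set.Ico_subset_Ico hlo hhi)

theorem injOn_coe_Ico {lo hi : ℝ} (h : hi - lo ≤ 1) :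
    Set.InjOn ((↑) : ℝ → UnitAddCircle) (Set.Ico lo hi) := fun _ hx _ hy hxy =>
  have hsub := Set.Ico_subset_Ico_right (show hi ≤ lo + 1 by linarith)
  (AddCircle.coe_eq_coe_iff_of_mem_Ico (hsub hx) (hsub hy)).1 hxy

theorem arc_sdiff_arc_left {lo mid hi : ℝ} (h : hi - lo ≤ 1) (hmid : lo ≤ mid) (hmid' : mid ≤ hi) :
    arc lo hi \ arc lo mid = arc mid hi := by
  rw [arc, arc, ← (injOn_coe_Ico h).image_sdiff_subset (Set.Ico_subset_Ico_right hmid'), arc]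
  congr 1
  ext y
  grind

theorem arc_sdiff_arc_right {lo mid hi : ℝ} (h : hi - lo ≤ 1) (hmid : lo ≤ mid)
    (hmid' : mid ≤ hi) : arc lo hi \ arc mid hi = arc lo mid := by
  rw [arc, arc, ← (injOn_coe_Ico h).image_sdiff_subset (Set.Ico_subset_Ico_left hmid), arc]
  congr 1
  ext y
  grind

theorem coe_mem_arc_iff {x lo hi : ℝ} (hlo : 0 ≤ lo) (hhi : hi ≤ 1) :
    (x : UnitAddCircle) ∈ arc lo hi ↔ Int.fract x ∈ Set.Ico lo hi := by
  refine ⟨fun ⟨y, hy, hyx⟩ => ?_, fun hx => ⟨Int.fract x, hx, AddCircle.coe_fract x⟩⟩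
  have hfract : y = Int.fract x := injOn_coe_Ico (by simp)
    (Set.Ico_subset_Ico hlo hhi hy) ⟨Int.fract_nonneg x, Int.fract_lt_one x⟩
    (hyx.trans (AddCircle.coe_fract x).symm)
  exact hfract ▸ hy

/-- The orbit `k • x` of the rotation by `x` induces on the arc `[-r, p)` the exchange of the
arcs `[-r, p - r)`, which moves by `r`, and `[p - r, p)`, which moves by `-p`; the times at which
the orbit visits these two arcs cut `v` into blocks `W` and `U` respectively, whose lengths
are the return times. -/
structure IsExchange (v : ℤ → Bool) (x : UnitAddCircle) (U W : List Bool) (p r : ℝ) : Prop where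
  nsmul_left : U.length • x = (-p : ℝ)
  nsmul_right : W.length • x = r
  tiling : Tiling v U W {k | k • x ∈ arc (p - r) p} {k | k • x ∈ arc (-r) (p - r)}

namespace IsExchange

variable {v : ℤ → Bool} {x : UnitAddCircle} {U W : List Bool} {p r : ℝ}

theorem merge_left (h : IsExchange v x U W p r) (hrp : r ≤ p) (hr : 0 ≤ r) (hp : p ≤ 1) :
    IsExchange v x (W ++ U) W (p - r) r where
  nsmul_left := by
    rw [List.length_append, add_nsmul, h.nsmul_left, h.nsmul_right, ← AddCircle.coe_add]
    congr 1
    ring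
  nsmul_right := h.nsmul_right
  tiling := by
    have hA : ∀ k : ℤ, (k + W.length) • x ∈ arc (p - r) p ↔ k • x ∈ arc (p - r - r) (p - r) := by
      intro k
      rw [add_zsmul, natCast_zsmul, h.nsmul_right, add_mem_arc_iff]
    have hB : arc (-r) (p - r) \ arc (p - r - r) (p - r) = arc (-r) (p - r - r) :=
      arc_sdiff_arc_right (by linarith) (by linarith) (by linarith)
    convert h.tiling.merge fun k hk => ?_ using 1
    · exact Set.ext fun k => (hA k).symm
    · ext k
      rw [← hB]
      exact and_congr_right' (hA k).symm.not
    · exact arc_subset_arc (by linarith) le_rfl ((hA k).1 hk)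

theorem merge_right (h : IsExchange v x U W p r) (hpr : p ≤ r) (hp : 0 ≤ p) (hr : r ≤ 1) :
    IsExchange v x U (U ++ W) p (r - p) where
  nsmul_left := h.nsmul_left
  nsmul_right := by
    rw [List.length_append, add_nsmul, h.nsmul_left, h.nsmul_right, ← AddCircle.coe_add]
    congr 1
    ring
  tiling := by
    have hB : ∀ k : ℤ, (k + U.length) • x ∈ arc (-r) (p - r) ↔
        k • x ∈ arc (-(r - p)) (p - (r - p)) := by
      intro k
      rw [add_zsmul, natCast_zsmul, h.nsmul_left, add_mem_arc_iff]
      ring_nf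
    have hA : arc (p - r) p \ arc (-(r - p)) (p - (r - p)) = arc (p - (r - p)) p := by
      rw [neg_sub]
      exact arc_sdiff_arc_left (by linarith) (by linarith) (by linarith)
    refine Tiling.symm ?_
    convert h.tiling.symm.merge fun k hk => ?_ using 1
    · exact Set.ext fun k => (hB k).symm
    · ext k
      rw [← hA]
      exact and_congr_right' (hB k).symm.not
    · exact arc_subset_arc (by linarith) (by linarith) ((hB k).1 hk)

theorem powAppend_left (h : IsExchange v x U W p r) (hr : 0 ≤ r) (hp : p ≤ 1) {a : ℕ}
    (ha : a * r ≤ p) : IsExchange v x (powAppend a W U) W (p - a * r) r := by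
  induction a with
  | zero => simpa using h
  | succ a ih =>
    push_cast at ha
    have har : 0 ≤ a * r := by positivity
    rw [powAppend_succ]
    convert (ih (by linarith)).merge_left (by linarith) hr (by linarith) using 1
    push_cast
    ring

theorem powAppend_right (h : IsExchange v x U W p r) (hp : 0 ≤ p) (hr : r ≤ 1) {a : ℕ}
    (ha : a * p ≤ r) : IsExchange v x U (powAppend a U W) p (r - a * p) := by
  induction a with
  | zero => simpa using h
  | succ a ih =>
    push_cast at ha
    have hap : 0 ≤ a * p := by positivity
    rw [powAppend_succ]
    convert (ih (by linarith)).merge_right (by linarith) hp (by linarith) using 1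
    push_cast
    ring

theorem v0_singletons {α : ℝ} (h0 : 0 ≤ α) (h1 : α ≤ 1) :
    IsExchange (v0 α) α [true] [false] (1 - α) α where
  nsmul_left := by simp [sub_eq_add_neg]
  nsmul_right := by simp
  tiling := by
    have hshift : ∀ (k : ℤ) (lo hi : ℝ), 0 ≤ lo → hi ≤ 1 →
        (k • (α : UnitAddCircle) ∈ arc (lo - α) (hi - α) ↔
          Int.fract (((k + 1 : ℤ) : ℝ) * α) ∈ Set.Ico lo hi) := fun k lo hi hlo hhi => by
      rw [← add_mem_arc_iff, ← coe_mem_arc_iff hlo hhi, ← zsmul_eq_mul, AddCircle.coe_zsmul,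
        add_zsmul, one_zsmul]
    convert Tiling.singletons (v0 α) using 1
    · ext k
      have := hshift k (1 - α) 1 (by linarith) le_rfl
      simp_all [v0, Int.fract_lt_one]
    · ext k
      have := hshift k 0 (1 - α) le_rfl (by linarith)
      simp_all [v0, lt_sub_iff_add_lt]

end IsExchange

end IntervalExchange

section ContinuedFraction

variable {α : ℝ}

/-- The exponent in `s_{n+1} = sₙ ^ e s_{n-1}` (at index `n`): it is `a_{n+1}`,
except that `s₁ = s₀ ^ (a₁ - 1) s₋₁`. -/
def swExp (α : ℝ) : ℕ → ℕ
  | 0 => pq α 0 - 1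
  | n + 1 => pq α (n + 1)

/-- The lengths of the exchanged arcs: `gap α (n + 1)` is `|qₙ α - pₙ|`, where `pₙ / qₙ` is the
`n`-th convergent, and `gap α 0 = 1 - α` is the length of the arc coded by the letter `0`. -/
def gap (α : ℝ) : ℕ → ℝ
  | 0 => 1 - α
  | n + 1 => ∏ k ∈ Finset.range (n + 1), gaussMap^[k] α

theorem sw_add_two (α : ℝ) (n : ℕ) :
    sw α (n + 2) = powAppend (swExp α n) (sw α (n + 1)) (sw α n) := by
  cases n <;> simp [sw, swExp, powAppend]

theorem sw_ne_nil (α : ℝ) (n : ℕ) : sw α n ≠ [] := by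
  induction n using Nat.twoStepInduction with
  | zero => simp [sw]
  | one => simp [sw]
  | more n ih _ => simp [sw_add_two, powAppend, ih]

theorem one_le_pq_zero (h0 : 0 < α) (h1 : α ≤ 1) : 1 ≤ pq α 0 :=
  Nat.le_floor (by simpa using (one_le_inv₀ h0).2 h1)

theorem length_sw_add_one (h0 : 0 < α) (h1 : α ≤ 1) (n : ℕ) :
    (sw α (n + 1)).length = qd α (n + 1) := by
  induction n using Nat.twoStepInduction with
  | zero => simp [sw, qd]
  | one => simp [sw, qd, one_le_pq_zero h0 h1]
  | more n ih ih' =>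
    rw [sw_add_two, length_powAppend, ih, ih']
    rfl

theorem recognizable_sw (α : ℝ) (n : ℕ) : Recognizable (sw α n) (sw α (n + 1)) := by
  induction n with
  | zero => exact .singletons
  | succ n ih =>
    rw [sw_add_two]
    exact (ih.powAppend (sw_ne_nil α n) (sw_ne_nil α (n + 1)) _).symm

theorem mul_gaussMap {x : ℝ} (hx : 0 < x) : x * gaussMap x = 1 - ⌊x⁻¹⌋₊ * x := by
  rw [gaussMap, Int.fract, ← natCast_floor_eq_intCast_floor (inv_nonneg.2 hx.le), mul_sub,
    mul_inv_cancel₀ hx.ne', mul_comm]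

theorem iterate_gaussMap_mem_Icc (h0 : 0 ≤ α) (h1 : α ≤ 1) (k : ℕ) :
    gaussMap^[k] α ∈ Set.Icc 0 1 := by
  cases k with
  | zero => exact ⟨h0, h1⟩
  | succ k =>
    rw [Function.iterate_succ_apply']
    exact ⟨Int.fract_nonneg _, (Int.fract_lt_one _).le⟩

theorem gap_mem_Icc (h0 : 0 ≤ α) (h1 : α ≤ 1) (n : ℕ) : gap α n ∈ Set.Icc 0 1 := by
  cases n with
  | zero => exact ⟨sub_nonneg.2 h1, sub_le_self 1 h0⟩
  | succ n =>
    exact ⟨Finset.prod_nonneg fun k _ => (iterate_gaussMap_mem_Icc h0 h1 k).1,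
      Finset.prod_le_one (fun k _ => (iterate_gaussMap_mem_Icc h0 h1 k).1)
        fun k _ => (iterate_gaussMap_mem_Icc h0 h1 k).2⟩

theorem gap_add_two (h0 : 0 ≤ α) (h1 : α ≤ 1) {n : ℕ} (hn : gaussMap^[n] α ≠ 0) :
    gap α (n + 2) = gap α n - swExp α n * gap α (n + 1) := by
  have hpos : 0 < gaussMap^[n] α := (iterate_gaussMap_mem_Icc h0 h1 n).1.lt_of_ne' hn
  have hstep := mul_gaussMap hpos
  rw [← Function.iterate_succ_apply' gaussMap, ← pq] at hstep
  cases n with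
  | zero =>
    replace hstep : α * gaussMap^[1] α = 1 - pq α 0 * α := hstep
    have hcast : ((pq α 0 - 1 : ℕ) : ℝ) = pq α 0 - 1 := Nat.cast_pred (one_le_pq_zero hpos h1)
    simp only [gap, swExp, Finset.prod_range_succ, Finset.prod_range_zero, one_mul, hcast,
      Function.iterate_zero_apply]
    linear_combination hstep
  | succ n =>
    simp only [gap, swExp, Finset.prod_range_succ _ (n + 2), Finset.prod_range_succ _ (n + 1)]
    linear_combination (∏ k ∈ Finset.range (n + 1), gaussMap^[k] α) * hstep

theorem irrational_iterate_gaussMap (hirr : Irrational α) (k : ℕ) :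
    Irrational (gaussMap^[k] α) := by
  induction k with
  | zero => exact hirr
  | succ k ih =>
    rw [Function.iterate_succ_apply']
    exact ih.inv.sub_intCast _

theorem isExchange_sw (h0 : 0 ≤ α) (h1 : α ≤ 1) {n : ℕ} (hn : ∀ k < n, gaussMap^[k] α ≠ 0) :
    IsExchange (v0 α) α (sw α n) (sw α (n + 1)) (gap α n) (gap α (n + 1)) ∨
      IsExchange (v0 α) α (sw α (n + 1)) (sw α n) (gap α (n + 1)) (gap α n) := by
  induction n with
  | zero => exact .inl (by simpa [sw, gap] using IsExchange.v0_singletons h0 h1)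
  | succ n ih =>
    obtain ⟨-, hle⟩ := gap_mem_Icc h0 h1 n
    obtain ⟨hnonneg, -⟩ := gap_mem_Icc h0 h1 (n + 1)
    have hgap := gap_add_two h0 h1 (hn n n.lt_succ_self)
    have hexp : swExp α n * gap α (n + 1) ≤ gap α n :=
      sub_nonneg.1 (hgap ▸ (gap_mem_Icc h0 h1 (n + 2)).1)
    rw [sw_add_two, hgap]
    rcases ih fun k hk => hn k (hk.trans n.lt_succ_self) with h | h
    · exact .inr (h.powAppend_left hnonneg hle hexp)
    · exact .inl (h.powAppend_right hnonneg hle hexp)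

theorem exists_tiling_sw_of_mem_hull (h0 : 0 ≤ α) (h1 : α ≤ 1) {v : ℤ → Bool} (hv : v ∈ hull α)
    {n : ℕ} (hn : ∀ k < n, gaussMap^[k] α ≠ 0) :
    ∃ A B, Tiling v (sw α n) (sw α (n + 1)) A B := by
  refine closure_minimal ?_ (recognizable_sw α n).isClosed_setOf_exists_tiling hv
  rintro _ ⟨m, rfl⟩
  rcases isExchange_sw h0 h1 hn with h | h
  · exact ⟨_, _, h.tiling.translate m⟩
  · exact ⟨_, _, h.tiling.symm.translate m⟩

end ContinuedFraction

section Partition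

variable {α : ℝ} {v : ℤ → Bool} {n : ℕ} {c : ℤ → ℤ}

theorem Tiling.apply_add_one {U W : List Bool} {A B : Set ℤ} (h : Tiling v U W A B) (hU : U ≠ [])
    (hc : StrictMono c) (hrange : Set.range c = A ∪ B) {i : ℤ} (hi : c i ∈ A) :
    c (i + 1) = c i + U.length := by
  obtain ⟨j, hj⟩ : c i + U.length ∈ Set.range c := hrange ▸ h.add_length_mem hU hi
  have hij : i < j := hc.lt_iff_lt.1 (by have := List.length_pos_iff.2 hU; omega)
  refine le_antisymm (hj ▸ hc.monotone hij) ?_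
  exact h.left_add_le _ hi _ (hrange ▸ Set.mem_range_self _) (hc (lt_add_one i))

theorem Tiling.exists_isPartition (h0 : 0 < α) (h1 : α ≤ 1) {A B : Set ℤ} (hn : 1 ≤ n)
    (h : Tiling v (sw α n) (sw α (n + 1)) A B) : ∃ c, IsPartition α v n c := by
  obtain ⟨c, hc, hrange, hc0, hc1⟩ := exists_strictMono_range_eq h.not_bddAbove h.not_bddBelow
  refine ⟨c, hc, hc0, hc1, Filter.tendsto_atTop_atTop_of_monotone' hc.monotone
    (hrange ▸ h.not_bddAbove), Filter.tendsto_atBot_atBot_of_monotone' hc.monotone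
    (hrange ▸ h.not_bddBelow), fun i => ?_⟩
  obtain ⟨n, rfl⟩ := Nat.exists_eq_add_of_le' hn
  refine (show c i ∈ A ∪ B from hrange ▸ Set.mem_range_self i).imp (fun hi => ?_) fun hi => ?_
  · rw [BlockIs, ← length_sw_add_one h0 h1, h.apply_add_one (sw_ne_nil α _) hc hrange hi]
    exact ⟨add_sub_cancel_left _ _, h.wordAt_left _ hi⟩
  · rw [BlockIs, ← length_sw_add_one h0 h1,
      h.symm.apply_add_one (sw_ne_nil α _) hc (hrange.trans (Set.union_comm A B)) hi]
    exact ⟨add_sub_cancel_left _ _, h.wordAt_right _ hi⟩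

theorem IsPartition.exists_tiling (h0 : 0 < α) (h1 : α ≤ 1) (hn : 1 ≤ n)
    (h : IsPartition α v n c) :
    ∃ A B, Tiling v (sw α n) (sw α (n + 1)) A B ∧ Set.range c = A ∪ B := by
  obtain ⟨hc, -, -, htop, hbot, hblock⟩ := h
  obtain ⟨n, rfl⟩ := Nat.exists_eq_add_of_le' hn
  simp only [BlockIs, ← length_sw_add_one h0 h1] at hblock
  set I : Set ℤ := {i | c (i + 1) - c i = (sw α (n + 1)).length ∧
    wordAt v (c i + 1) (sw α (n + 1)).length = sw α (n + 1)}
  have hI : ∀ i ∉ I, c (i + 1) - c i = (sw α (n + 1 + 1)).length ∧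
    wordAt v (c i + 1) (sw α (n + 1 + 1)).length = sw α (n + 1 + 1) := fun i =>
    (hblock i).resolve_left
  have hrange : Set.range c = c '' I ∪ c '' Iᶜ := by
    rw [← Set.image_union, Set.union_compl_self, Set.image_univ]
  have hnext : ∀ {i l}, l ∈ c '' I ∪ c '' Iᶜ → c i < l → c (i + 1) ≤ l := by
    intro i l hl hil
    obtain ⟨j, rfl⟩ := hrange ▸ hl
    exact hc.monotone (hc.lt_iff_lt.1 hil)
  refine ⟨c '' I, c '' Iᶜ, ⟨?_, ?_, fun x => ?_, ?_, ?_, ?_⟩, hrange⟩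
  · rintro _ ⟨i, hi, rfl⟩
    exact hi.2
  · rintro _ ⟨i, hi, rfl⟩
    exact (hI i hi).2
  · obtain ⟨i, hix, hxi⟩ := exists_apply_le_lt_apply_add_one hc.monotone
      (Filter.not_bddAbove_of_tendsto_atTop htop) (Filter.not_bddBelow_of_tendsto_atBot hbot) x
    by_cases hi : i ∈ I
    · exact .inl ⟨c i, ⟨i, hi, rfl⟩, hix, by have := hi.1; omega⟩
    · exact .inr ⟨c i, ⟨i, hi, rfl⟩, hix, by have := (hI i hi).1; omega⟩
  · exact (Set.disjoint_image_iff hc.injective).2 disjoint_compl_right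
  · rintro _ ⟨i, hi, rfl⟩ l hl hil
    have := hnext hl hil
    have := hi.1
    omega
  · rintro _ ⟨i, hi, rfl⟩ l hl hil
    have := hnext hl hil
    have := (hI i hi).1
    omega

theorem IsPartition.eq (h0 : 0 < α) (h1 : α ≤ 1) (hn : 1 ≤ n) {d : ℤ → ℤ}
    (hc : IsPartition α v n c) (hd : IsPartition α v n d) : c = d := by
  obtain ⟨A, B, hT, hcAB⟩ := hc.exists_tiling h0 h1 hn
  obtain ⟨A', B', hT', hdAB⟩ := hd.exists_tiling h0 h1 hn
  obtain ⟨rfl, rfl⟩ := (recognizable_sw α n).eq_of_tiling hT hT'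
  exact strictMono_eq_of_range_eq hc.1 hd.1 (hcAB.trans hdAB.symm) hc.2.1 hc.2.2.1 hd.2.1 hd.2.2.1

end Partition

/-- The hypothesis `hgauss` says that `α` has at least `n` partial quotients `a₁, …, aₙ`. -/
theorem partition_exists_unique_general {α : ℝ} (h0 : 0 < α) (h1 : α ≤ 1) {v : ℤ → Bool}
    (hv : v ∈ hull α) {n : ℕ} (hn : 1 ≤ n) (hgauss : ∀ k < n, gaussMap^[k] α ≠ 0) :
    ∃! c : ℤ → ℤ, IsPartition α v n c := by
  obtain ⟨A, B, h⟩ := exists_tiling_sw_of_mem_hull h0.le h1 hv hgauss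
  obtain ⟨c, hc⟩ := h.exists_isPartition h0 h1 hn
  exact ⟨c, hc, fun d hd => hd.eq h0 h1 hn hc⟩

/-- Lemma 2.1. Every `v ∈ Ω` has, for every `n ≥ 1`, a unique
`(n-1, n)`-partition. -/
theorem partition_exists_unique (α : ℝ) (hirr : Irrational α) (h0 : 0 < α) (h1 : α < 1) :
    ∀ v ∈ hull α, ∀ n : ℕ, 1 ≤ n → ∃! c : ℤ → ℤ, IsPartition α v n c := by
  intro v hv n hn
  exact partition_exists_unique_general h0 h1.le hv hn fun k _ =>
    (irrational_iterate_gaussMap hirr k).ne_zero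

end
end

section
/- With t₀ = B, t₁ = A and t_{n+1} = tₙ · t̄_{n−1} for n ≥ 1, one has t_{n+1} = σⁿ(A) for every n ≥ 0. -/
/-- The four-letter alphabet `{A, B, A′, B′}`. -/
inductive Letter : Type
  | A | B | A' | B'
  deriving DecidableEq

open Letter

/-- The substitution `σ : A ↦ AB′, A′ ↦ BA′, B ↦ A, B′ ↦ A′`. -/
def sigmaL : Letter → List Letter
  | A => [A, B']
  | A' => [B, A']
  | B => [A]
  | B' => [A']

/-- `σ` extended to words as a monoid homomorphism. -/
def sigmaW (l : List Letter) : List Letter := l.flatMap sigmaL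

/-- the exchange `A ↔ A′`, `B ↔ B′`. -/
def swapL : Letter → Letter
  | A => A' | A' => A | B => B' | B' => B

/-- `s̄`: the reversal of `s` with `A ↔ A′` and `B ↔ B′` exchanged. -/
def barW (l : List Letter) : List Letter := l.reverse.map swapL

/-- `t₀ = B`, `t₁ = A`, `t_{n+1} = tₙ · t̄_{n-1}`. -/
def tW : ℕ → List Letter
  | 0 => [B]
  | 1 => [A]
  | (n+2) => tW (n+1) ++ barW (tW n)

/-!
Because `σ` respects concatenation and commutes with the bar, the words `σ(tₙ)` obey the same
recurrence as the words `tₙ₊₁`. The initial values agree as well: `t₁ = A = σ(B)` and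
`t₂ = AB′ = σ(A)`. Hence `tₙ₊₁ = σ(tₙ)` for all `n`.
-/

theorem flatMap_map_reverse {α β γ δ : Type*} {f : α → List β} {g : γ → List δ}
    {p : α → γ} {q : β → δ} (hfg : ∀ a, g (p a) = (f a).reverse.map q) (l : List α) :
    (l.reverse.map p).flatMap g = (l.flatMap f).reverse.map q := by
  simp only [List.flatMap_map, hfg, List.reverse_flatMap, List.map_flatMap, Function.comp_apply]

theorem sigmaL_swapL (a : Letter) : sigmaL (swapL a) = barW (sigmaL a) := by
  cases a <;> rfl

theorem sigmaW_append (s t : List Letter) : sigmaW (s ++ t) = sigmaW s ++ sigmaW t :=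
  List.flatMap_append

theorem sigmaW_barW (s : List Letter) : sigmaW (barW s) = barW (sigmaW s) :=
  flatMap_map_reverse sigmaL_swapL s

theorem tW_succ_eq_sigmaW : ∀ n : ℕ, tW (n + 1) = sigmaW (tW n)
  | 0 => rfl
  | 1 => rfl
  | n + 2 => calc
    tW (n + 3) = tW (n + 2) ++ barW (tW (n + 1)) := rfl
    _ = sigmaW (tW (n + 1)) ++ barW (sigmaW (tW n)) := by
      rw [tW_succ_eq_sigmaW (n + 1), tW_succ_eq_sigmaW n]
    _ = sigmaW (tW (n + 1)) ++ sigmaW (barW (tW n)) := by rw [sigmaW_barW]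
    _ = sigmaW (tW (n + 2)) := (sigmaW_append _ _).symm

/-- Proposition 4.1 (2) / Lemma step `tₙ = σⁿ(A)`:
`t_{n+1} = σⁿ(A)` for every `n ≥ 0`. -/
theorem tW_eq_sigma_iterate : ∀ n : ℕ, tW (n + 1) = sigmaW^[n] [Letter.A] := by
  intro n
  induction n with
  | zero => rfl
  | succ n ih => rw [tW_succ_eq_sigmaW, ih, Function.iterate_succ_apply']
end

section
/- For every n ≥ 0, the word obtained from σⁿ(A) by replacing each of A, A′ by 1 and each of B, B′ by 0 equals (h(0), h(1), …, h(L−1)), where L is the length of σⁿ(A). In particular, the projection of the fixed point of σ starting with A is the sequence h = h_{AA}. -/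
open scoped Classical

open Letter

/-- The projection identifying `A, A′` with `1` (`true`) and `B, B′` with `0` (`false`). -/
def projL : Letter → Bool
  | A => true | A' => true | B => false | B' => false

/-- The sequence `h = h_{AA}`: `h(m) = 1` iff the fractional part of `mα + 1/2` lies in
`[1-α, 1)`. -/
noncomputable def hseq (α : ℝ) (m : ℕ) : Bool :=
  decide (1 - α ≤ Int.fract ((m : ℝ) * α + 1 / 2))

/-!
Code the orbit of `1/2` under the rotation by `α` by halving the two windows of the Fibonacci
rotation, so that identifying `A` with `A'` and `B` with `B'` recovers `h`. Since `α² = 1 - α`, the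
`σ`-image of the letter at an orbit point `x` starts at the orbit point `(1 + α) / 2 - α x`. This
contraction maps each window into the window of the first letter of the corresponding `σ`-image,
and a further rotation by `α` reaches the window of the second letter, if there is one, so the
coding is a fixed point of `σ`. The contraction reverses orientation, so the endpoints of the
half-open windows have to be avoided; they are, because `α` is irrational.
-/

theorem flatMap_map_range_eq_map_range {β γ : Type*} {g : β → List γ} {f : ℕ → β} {f' : ℕ → γ}
    {b : ℕ → ℕ} (hb₀ : b 0 = 0) (hb : Monotone b)
    (h : ∀ m, g (f m) = (List.Ico (b m) (b (m + 1))).map f') (n : ℕ) :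
    ((List.range n).map f).flatMap g = (List.range (b n)).map f' := by
  induction n with
  | zero => simp [hb₀]
  | succ n ih =>
    have hsplit : List.range (b (n + 1)) = List.range (b n) ++ List.Ico (b n) (b (n + 1)) := by
      simp only [← List.Ico.zero_bot]
      exact (List.Ico.append_consecutive (Nat.zero_le _) (hb n.le_succ)).symm
    rw [hsplit, List.range_succ, List.map_append, List.flatMap_append, ih, List.map_append, ← h]
    simp

section InverseGoldenRatio

variable {α : ℝ}

theorem lt_one_of_sq_eq_one_sub (hα : α ≠ 0) (hsq : α ^ 2 = 1 - α) : α < 1 := by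
  have : 0 < α ^ 2 := by positivity
  linarith

theorem one_half_lt_of_sq_eq_one_sub (hpos : 0 < α) (hsq : α ^ 2 = 1 - α) : 1 / 2 < α := by
  by_contra! hle
  have : α ^ 2 ≤ (1 / 2) ^ 2 := by gcongr
  linarith

theorem irrational_of_sq_eq_one_sub (hsq : α ^ 2 = 1 - α) : Irrational α := by
  have hprod : (α + Real.goldenRatio) * (α + Real.goldenConj) = 0 := by
    linear_combination hsq + α * Real.goldenRatio_add_goldenConj + Real.goldenRatio_mul_goldenConj
  rcases mul_eq_zero.1 hprod with h | h
  · exact eq_neg_of_add_eq_zero_left h ▸ Real.goldenRatio_irrational.neg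
  · exact eq_neg_of_add_eq_zero_left h ▸ Real.goldenConj_irrational.neg

end InverseGoldenRatio

/-- The coding of the rotation by `α`: the letter whose window contains `x ∈ [0, 1)`. The windows of
`B'`, `B`, `A`, `A'` follow one another in this order and halve `[0, 1 - α)` and `[1 - α, 1)`, the
two windows of the Fibonacci rotation. -/
noncomputable def windowLetter (α x : ℝ) : Letter :=
  if x < (1 - α) / 2 then B' else if x < 1 - α then B else if x < 1 - α / 2 then A else A'

/-- The `m`-th point of the orbit of `1/2` under the rotation `x ↦ x + α` of `[0, 1)`. -/
noncomputable def orbitPoint (α : ℝ) (m : ℕ) : ℝ :=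
  Int.fract ((m : ℝ) * α + 1 / 2)

/-- The letter coding the `m`-th orbit point; for `α = (√5 - 1) / 2` this sequence is the fixed
point of `σ` starting with `A`. -/
noncomputable def codedLetter (α : ℝ) (m : ℕ) : Letter :=
  windowLetter α (orbitPoint α m)

/-- The length of the image under `σ` of the first `m` coded letters, for `0 ≤ α ≤ 1`: the floor
counts the letters `A`, `A'` among them, which are those whose image has length two. -/
noncomputable def blockStart (α : ℝ) (m : ℕ) : ℕ :=
  m + ⌊(m : ℝ) * α + 1 / 2⌋₊

section Windows

variable {α x : ℝ}

theorem windowLetter_eq_B' (hx : x < (1 - α) / 2) : windowLetter α x = B' :=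
  if_pos hx

theorem windowLetter_eq_B (hx : (1 - α) / 2 ≤ x) (hx' : x < 1 - α) : windowLetter α x = B := by
  rw [windowLetter, if_neg hx.not_gt, if_pos hx']

theorem windowLetter_eq_A (hα : α ≤ 1) (hx : 1 - α ≤ x) (hx' : x < 1 - α / 2) :
    windowLetter α x = A := by
  rw [windowLetter, if_neg (by linarith), if_neg hx.not_gt, if_pos hx']

theorem windowLetter_eq_A' (hα : 0 ≤ α) (hx : 1 - α / 2 ≤ x) :
    windowLetter α x = A' := by
  rw [windowLetter, if_neg (by linarith), if_neg (by linarith), if_neg hx.not_gt]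

theorem projL_windowLetter (hα : α ≤ 1) (x : ℝ) :
    projL (windowLetter α x) = decide (1 - α ≤ x) := by
  grind [windowLetter, projL]

end Windows

theorem projL_codedLetter {α : ℝ} (hα : α ≤ 1) (m : ℕ) : projL (codedLetter α m) = hseq α m :=
  projL_windowLetter hα _

theorem orbitPoint_nonneg (α : ℝ) (m : ℕ) : 0 ≤ orbitPoint α m :=
  Int.fract_nonneg _

theorem orbitPoint_lt_one (α : ℝ) (m : ℕ) : orbitPoint α m < 1 :=
  Int.fract_lt_one _

theorem floor_add_orbitPoint (α : ℝ) (m : ℕ) :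
    (⌊(m : ℝ) * α + 1 / 2⌋ : ℝ) + orbitPoint α m = m * α + 1 / 2 :=
  Int.floor_add_fract _

theorem orbitPoint_zero (α : ℝ) : orbitPoint α 0 = 1 / 2 := by
  norm_num [orbitPoint, Int.fract_eq_self]

theorem blockStart_zero (α : ℝ) : blockStart α 0 = 0 := by
  norm_num [blockStart, Nat.floor_eq_zero]

section Rotation

variable {α : ℝ}

theorem orbitPoint_eq {m : ℕ} {k : ℤ} {x : ℝ} (hx : (m : ℝ) * α + 1 / 2 = k + x) (h₀ : 0 ≤ x)
    (h₁ : x < 1) : orbitPoint α m = x :=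
  Int.fract_eq_iff.2 ⟨h₀, h₁, k, by linarith⟩

theorem orbitPoint_succ_of_lt {m : ℕ} (hα : 0 ≤ α) (hm : orbitPoint α m < 1 - α) :
    orbitPoint α (m + 1) = orbitPoint α m + α := by
  have hfloor := floor_add_orbitPoint α m
  have hnonneg := orbitPoint_nonneg α m
  exact orbitPoint_eq (k := ⌊(m : ℝ) * α + 1 / 2⌋) (by push_cast; linarith) (by linarith)
    (by linarith)

theorem orbitPoint_succ_of_le {m : ℕ} (hα : α ≤ 1) (hm : 1 - α ≤ orbitPoint α m) :
    orbitPoint α (m + 1) = orbitPoint α m + α - 1 := by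
  have hfloor := floor_add_orbitPoint α m
  have hlt := orbitPoint_lt_one α m
  exact orbitPoint_eq (k := ⌊(m : ℝ) * α + 1 / 2⌋ + 1) (by push_cast; linarith) (by linarith)
    (by linarith)

theorem two_mul_orbitPoint_add_mul_ne_intCast (hα : Irrational α) (m : ℕ) {j : ℕ} (hj : j ≠ 0)
    (b : ℤ) : 2 * orbitPoint α m + j * α ≠ b := by
  intro h
  have hfloor := floor_add_orbitPoint α m
  refine (hα.natCast_mul (m := 2 * m + j) (by omega)).ne_int
    (2 * ⌊(m : ℝ) * α + 1 / 2⌋ + b - 1) ?_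
  push_cast
  linarith

theorem blockStart_monotone (hα : 0 ≤ α) : Monotone (blockStart α) := by
  intro m n hmn
  unfold blockStart
  gcongr

theorem cast_blockStart (hα : 0 ≤ α) (m : ℕ) :
    (blockStart α m : ℝ) = m + (m * α + 1 / 2 - orbitPoint α m) := by
  rw [blockStart, Nat.cast_add, natCast_floor_eq_intCast_floor (by positivity), orbitPoint,
    Int.self_sub_fract]

theorem blockStart_succ_of_lt {m : ℕ} (hα : 0 ≤ α) (hm : orbitPoint α m < 1 - α) :
    blockStart α (m + 1) = blockStart α m + 1 := by
  have hsucc := orbitPoint_succ_of_lt hα hm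
  rify
  rw [cast_blockStart hα, cast_blockStart hα, hsucc]
  push_cast
  ring

theorem blockStart_succ_of_le {m : ℕ} (h₀ : 0 ≤ α) (h₁ : α ≤ 1) (hm : 1 - α ≤ orbitPoint α m) :
    blockStart α (m + 1) = blockStart α m + 2 := by
  have hsucc := orbitPoint_succ_of_le h₁ hm
  rify
  rw [cast_blockStart h₀, cast_blockStart h₀, hsucc]
  push_cast
  ring

end Rotation

section Desubstitution

variable {α : ℝ}

theorem orbitPoint_blockStart (hpos : 0 < α) (hsq : α ^ 2 = 1 - α) (m : ℕ) :
    orbitPoint α (blockStart α m) = (1 + α) / 2 - α * orbitPoint α m := by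
  have hlt := lt_one_of_sq_eq_one_sub hpos.ne' hsq
  have hnonneg : 0 ≤ α * orbitPoint α m := mul_nonneg hpos.le (orbitPoint_nonneg α m)
  have hle : α * orbitPoint α m < α := mul_lt_of_lt_one_right hpos (orbitPoint_lt_one α m)
  refine orbitPoint_eq (k := m) ?_ (by linarith) (by linarith)
  -- As `(1 + α) α = 1`, the term `m (1 + α)` of `blockStart α m` contributes the integer `m`.
  rw [cast_blockStart hpos.le]
  push_cast
  linear_combination (m : ℝ) * hsq

theorem sigmaL_codedLetter_of_lt {m : ℕ} (hpos : 0 < α) (hsq : α ^ 2 = 1 - α)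
    (hm : orbitPoint α m < 1 - α) :
    sigmaL (codedLetter α m) = [codedLetter α (blockStart α m)] := by
  have hlt := lt_one_of_sq_eq_one_sub hpos.ne' hsq
  have hne : orbitPoint α m ≠ (1 - α) / 2 := fun h =>
    two_mul_orbitPoint_add_mul_ne_intCast (irrational_of_sq_eq_one_sub hsq) m one_ne_zero 1
      (by rw [h]; push_cast; ring)
  have hstart := orbitPoint_blockStart hpos hsq m
  simp only [codedLetter]
  rcases hne.lt_or_gt with hx | hx
  · have himage : 1 - α / 2 < orbitPoint α (blockStart α m) := by nlinarith
    rw [windowLetter_eq_B' hx, windowLetter_eq_A' hpos.le himage.le, sigmaL]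
  · have himage : 1 - α < orbitPoint α (blockStart α m) := by nlinarith
    have himage' : orbitPoint α (blockStart α m) < 1 - α / 2 := by nlinarith
    rw [windowLetter_eq_B hx.le hm, windowLetter_eq_A hlt.le himage.le himage', sigmaL]

theorem sigmaL_codedLetter_of_le {m : ℕ} (hpos : 0 < α) (hsq : α ^ 2 = 1 - α)
    (hm : 1 - α ≤ orbitPoint α m) :
    sigmaL (codedLetter α m) =
      [codedLetter α (blockStart α m), codedLetter α (blockStart α m + 1)] := by
  have hlt := lt_one_of_sq_eq_one_sub hpos.ne' hsq
  have hhalf := one_half_lt_of_sq_eq_one_sub hpos hsq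
  have hirr := irrational_of_sq_eq_one_sub hsq
  have hne : orbitPoint α m ≠ 1 - α := fun h =>
    two_mul_orbitPoint_add_mul_ne_intCast hirr m two_ne_zero 2 (by rw [h]; push_cast; ring)
  have hne' : orbitPoint α m ≠ 1 - α / 2 := fun h =>
    two_mul_orbitPoint_add_mul_ne_intCast hirr m one_ne_zero 2 (by rw [h]; push_cast; ring)
  have hstart := orbitPoint_blockStart hpos hsq m
  simp only [codedLetter]
  rcases hne'.lt_or_gt with hx | hx
  · have himage : 1 - α < orbitPoint α (blockStart α m) := by nlinarith
    have himage' : orbitPoint α (blockStart α m) < 3 / 2 * (1 - α) := by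
      nlinarith [hm.lt_of_ne' hne]
    have hnext := orbitPoint_succ_of_le hlt.le himage.le
    rw [windowLetter_eq_A hlt.le hm hx, windowLetter_eq_A hlt.le himage.le (by linarith),
      windowLetter_eq_B' (by linarith), sigmaL]
  · have himage : (1 - α) / 2 < orbitPoint α (blockStart α m) := by
      nlinarith [orbitPoint_lt_one α m]
    have himage' : orbitPoint α (blockStart α m) < 1 - α := by nlinarith
    have hnext := orbitPoint_succ_of_lt hpos.le himage'
    rw [windowLetter_eq_A' hpos.le hx.le, windowLetter_eq_B himage.le himage',
      windowLetter_eq_A' hpos.le (by linarith), sigmaL]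

theorem sigmaL_codedLetter (hpos : 0 < α) (hsq : α ^ 2 = 1 - α) (m : ℕ) :
    sigmaL (codedLetter α m) =
      (List.Ico (blockStart α m) (blockStart α (m + 1))).map (codedLetter α) := by
  rcases lt_or_ge (orbitPoint α m) (1 - α) with hm | hm
  · rw [blockStart_succ_of_lt hpos.le hm, sigmaL_codedLetter_of_lt hpos hsq hm]
    simp [List.Ico]
  · have hlt := lt_one_of_sq_eq_one_sub hpos.ne' hsq
    rw [blockStart_succ_of_le hpos.le hlt.le hm, sigmaL_codedLetter_of_le hpos hsq hm]
    simp [List.Ico, List.range'_succ]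

theorem codedLetter_zero (hpos : 0 < α) (hsq : α ^ 2 = 1 - α) : codedLetter α 0 = A := by
  have hlt := lt_one_of_sq_eq_one_sub hpos.ne' hsq
  have hhalf := one_half_lt_of_sq_eq_one_sub hpos hsq
  rw [codedLetter, orbitPoint_zero]
  exact windowLetter_eq_A hlt.le (by linarith) (by linarith)

end Desubstitution

theorem semiconj_map_codedLetter_range {α : ℝ} (hpos : 0 < α) (hsq : α ^ 2 = 1 - α) :
    Function.Semiconj (fun n => (List.range n).map (codedLetter α)) (blockStart α) sigmaW :=
  fun n => (flatMap_map_range_eq_map_range (blockStart_zero α) (blockStart_monotone hpos.le)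
    (sigmaL_codedLetter hpos hsq) n).symm

theorem sigmaW_iterate_singleton_A {α : ℝ} (hpos : 0 < α) (hsq : α ^ 2 = 1 - α) (n : ℕ) :
    sigmaW^[n] [A] = (List.range ((blockStart α)^[n] 1)).map (codedLetter α) := by
  simpa [codedLetter_zero hpos hsq] using
    ((semiconj_map_codedLetter_range hpos hsq).iterate_right n 1).symm

/-- For every `n`, projecting `σⁿ(A)` to `{0,1}` (via `A, A′ ↦ 1`,
`B, B′ ↦ 0`) yields the prefix `(h(0), h(1), …, h(L-1))` of `h = h_{AA}`, where
`L = |σⁿ(A)|`; hence the projection of the fixed point of `σ` starting with `A` is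
`h_{AA}`. -/
theorem sigma_iterate_proj_eq_hseq (α : ℝ) (hα : α = (Real.sqrt 5 - 1) / 2) :
    ∀ n : ℕ,
      (sigmaW^[n] [Letter.A]).map projL =
        (List.range (sigmaW^[n] [Letter.A]).length).map (fun m => hseq α m) := by
  intro n
  have hconj : α = -Real.goldenConj := by rw [hα, Real.goldenConj]; ring
  have hpos : 0 < α := hconj ▸ neg_pos.2 Real.goldenConj_neg
  have hsq : α ^ 2 = 1 - α := by rw [hconj, neg_sq, Real.goldenConj_sq]; ring
  have hle : α ≤ 1 := (lt_one_of_sq_eq_one_sub hpos.ne' hsq).le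
  rw [sigmaW_iterate_singleton_A hpos hsq, List.map_map, List.length_map, List.length_range]
  exact List.map_congr_left fun m _ => projL_codedLetter hle m
end

section
/- Let k ≥ 1 and 0 ≤ j ≤ q_{k−1} − 1, set n = q_k + j, and assume n ≥ 2 (so that f(n) = q_{k+1} + q_k − 1 + j). Then among the n+1 factors of v₀ of length n: exactly q_{k−1} − 1 − j of them (namely those occurring in the prefix (v₀(1), …, v₀(q_k + q_{k−1} − 2))) occur exactly a_{k+1} + 1 times as subwords of (v₀(1), …, v₀(f(n))); exactly q_k − q_{k−1} + 1 + j of them occur exactly a_{k+1} times; and exactly j + 1 of them occur exactly once. -/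
open scoped Classical

noncomputable section

/-!
Let `⌊lα⌋` be the height of `v₀` at `l`; two words agree iff the heights increase in the same way
along their windows. The only property of `q = q_k` and `Q = q_{k+1}` that matters is that `Q` is
the first time at which the rotation by `α` comes closer to `0` than at time `q`. This makes `q` a
quasi-period of the height as long as `0 < l < Q`, and makes the quasi-period fail precisely at
`l = Q`. For `q ≤ n < Q` it follows that the words of length `n` starting at `m < q + Q - 1 - n`
depend only on `m` modulo `q`, and take `q` different values because a quasi-period `d < q` would
give `‖dα‖ < ‖qα‖`, whereas the windows reaching the failure at `Q` carry pairwise different words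
that occur nowhere else. These are `n + 1` words, and there are no others: the word at `m` is a
monotone function of the fractional part of `(m + 1)α`, with at most `n` jumps. Counting occurrences
is thus counting a residue class modulo `q` below `q + Q - 1 - n`.
-/

section Heights

variable {α : ℝ} {m m' n : ℕ}

/-- The height `⌊lα⌋`, which is the number of letters `1` among `v₀(0), …, v₀(l-1)`. Equality of
words is studied through its increments. -/
def height (α : ℝ) (l : ℕ) : ℤ := ⌊(l : ℝ) * α⌋

theorem height_succ (hα : α ∈ Set.Icc (0 : ℝ) 1) (l : ℕ) :
    height α (l + 1) = height α l + (v0 α l).toNat := by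
  have hfloor := Int.floor_add_fract ((l : ℝ) * α)
  have hnonneg := Int.fract_nonneg ((l : ℝ) * α)
  have hlt := Int.fract_lt_one ((l : ℝ) * α)
  obtain ⟨h0, h1⟩ := hα
  unfold height v0
  rw [Int.floor_eq_iff]
  by_cases h : 1 - α ≤ Int.fract ((l : ℝ) * α)
  · simp only [Int.cast_natCast, h, decide_true, Bool.toNat_true]
    push_cast
    constructor <;> linarith
  · simp only [Int.cast_natCast, h, decide_false, Bool.toNat_false]
    push_cast
    constructor <;> linarith

theorem length_word (α : ℝ) (m n : ℕ) : (word α m n).length = n := by simp [word]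

theorem isFactor_word (α : ℝ) (m n : ℕ) : IsFactor α (word α m n) := ⟨m, by rw [length_word]⟩

theorem word_eq_word_iff_v0 :
    word α m n = word α m' n ↔
      ∀ i < n, v0 α ((m + 1 + i : ℕ) : ℤ) = v0 α ((m' + 1 + i : ℕ) : ℤ) := by
  -- In `word`, the cast `ℕ → ℤ` is elaborated as a monadic map over the list, not pointwise.
  simp only [word, List.bind_eq_flatMap, List.pure_def, List.map_inj_left, List.mem_flatMap,
    List.mem_range, List.mem_singleton]
  push_cast
  exact ⟨fun h i hi => h i ⟨i, hi, rfl⟩, fun h _ ⟨i, hi, hcast⟩ => hcast ▸ h i hi⟩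

theorem word_eq_word_iff_height (hα : α ∈ Set.Icc (0 : ℝ) 1) :
    word α m n = word α m' n ↔ ∀ i ≤ n,
      height α (m + 1 + i) - height α (m + 1) = height α (m' + 1 + i) - height α (m' + 1) := by
  have hstep (m i : ℕ) := height_succ hα (m + 1 + i)
  rw [word_eq_word_iff_v0]
  constructor
  · intro h i
    induction i with
    | zero => simp
    | succ i ih =>
      intro hi
      have hletter := h i hi
      rw [← add_assoc, ← add_assoc, hstep, hstep, hletter]
      have := ih (by omega)
      omega
  · intro h i hi
    have hlast := h i hi.le
    have hnext := h (i + 1) hi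
    rw [← add_assoc, ← add_assoc, hstep, hstep] at hnext
    have : (v0 α ((m + 1 + i : ℕ) : ℤ)).toNat = (v0 α ((m' + 1 + i : ℕ) : ℤ)).toNat := by omega
    exact (by decide : ∀ a b : Bool, a.toNat = b.toNat → a = b) _ _ this

theorem setOf_factor_occursIn_eq_image (α : ℝ) (n N : ℕ) :
    {w : List Bool | w.length = n ∧ IsFactor α w ∧ OccursIn α w N} =
      (word α · n) '' Set.Ico 0 (N + 1 - n) := by
  ext w
  constructor
  · rintro ⟨rfl, -, m, hm, hw⟩
    exact ⟨m, ⟨m.zero_le, by omega⟩, hw.symm⟩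
  · rintro ⟨m, ⟨-, hm⟩, rfl⟩
    exact ⟨length_word α m n, isFactor_word α m n, m, by rw [length_word]; omega,
      by rw [length_word]⟩

end Heights

section Complexity

variable {α : ℝ} {n : ℕ}

/-- The total carry `∑ (⌊x + iα⌋ - ⌊iα⌋)` over `1 ≤ i ≤ n`. It is monotone in the starting point
`x` and takes at most `n + 1` values on `[0, 1)`, which bounds the number of factors. -/
def carry (α : ℝ) (n : ℕ) (x : ℝ) : ℤ :=
  ∑ i ∈ Finset.range n, (⌊x + (i + 1 : ℕ) * α⌋ - ⌊((i + 1 : ℕ) : ℝ) * α⌋)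

theorem carry_mem_Icc {x : ℝ} (hx : x ∈ Set.Icc (0 : ℝ) 1) :
    carry α n x ∈ Finset.Icc (0 : ℤ) n := by
  obtain ⟨h0, h1⟩ := hx
  refine Finset.mem_Icc.2 ⟨Finset.sum_nonneg fun i _ => ?_,
    (Finset.sum_le_card_nsmul _ _ 1 fun i _ => ?_).trans (by simp)⟩
  · exact sub_nonneg.2 (Int.floor_le_floor (by linarith))
  · rw [sub_le_iff_le_add', ← Int.floor_add_one]
    exact Int.floor_le_floor (by linarith)

theorem floor_add_mul_eq_of_carry_eq {x y : ℝ} (h : carry α n x = carry α n y) {i : ℕ}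
    (hi : i < n) : ⌊x + (i + 1 : ℕ) * α⌋ = ⌊y + (i + 1 : ℕ) * α⌋ := by
  wlog hxy : x ≤ y generalizing x y
  · exact (this h.symm (le_of_not_ge hxy)).symm
  have hterm := (Finset.sum_eq_sum_iff_of_le fun i _ => sub_le_sub_right
    (Int.floor_le_floor (by linarith)) _).1 h
  exact sub_left_inj.1 (hterm i (Finset.mem_range.2 hi))

theorem height_add_sub_height (α : ℝ) (l i : ℕ) :
    height α (l + i) - height α l = ⌊Int.fract ((l : ℝ) * α) + i * α⌋ := by
  rw [height, height, ← Int.floor_sub_intCast, Int.fract]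
  congr 1
  push_cast
  ring

theorem word_eq_of_carry_eq (hα : α ∈ Set.Icc (0 : ℝ) 1) {m m' : ℕ}
    (h : carry α n (Int.fract ((m + 1 : ℕ) * α)) = carry α n (Int.fract ((m' + 1 : ℕ) * α))) :
    word α m n = word α m' n := by
  rw [word_eq_word_iff_height hα]
  intro i hi
  cases i with
  | zero => simp
  | succ i =>
    rw [height_add_sub_height, height_add_sub_height]
    exact floor_add_mul_eq_of_carry_eq h hi

theorem exists_mem_word_eq_of_injOn (hα : α ∈ Set.Icc (0 : ℝ) 1) {S : Finset ℕ}
    (hS : n < S.card) (hinj : Set.InjOn (word α · n) S) (m : ℕ) :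
    ∃ s ∈ S, word α s n = word α m n := by
  have hmaps (m : ℕ) :
      carry α n (Int.fract ((m + 1 : ℕ) * α)) ∈ Finset.Icc (0 : ℤ) n :=
    carry_mem_Icc ⟨Int.fract_nonneg _, (Int.fract_lt_one _).le⟩
  have hsurj := Finset.surjOn_of_injOn_of_card_le _ (fun m _ => hmaps m)
    (fun s hs t ht hst => hinj hs ht (word_eq_of_carry_eq hα hst)) (by simpa using hS)
  obtain ⟨s, hs, hsm⟩ := hsurj (hmaps m)
  exact ⟨s, hs, word_eq_of_carry_eq hα hsm⟩

end Complexity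

theorem nsmul_eq_nsmul_of_quasiperiods {G : Type*} [AddCommGroup G] {F : ℕ → G} {q d : ℕ}
    {p P : G} (hq : ∀ t < d, F (t + q) = F t + p) (hd : ∀ i < q, F (i + d) = F i + P) :
    d • p = q • P := by
  have hqsum : ∑ t ∈ Finset.range d, F (q + t) = ∑ t ∈ Finset.range d, F t + d • p := by
    simp [Finset.sum_congr rfl fun t ht => (add_comm q t ▸ hq t (Finset.mem_range.1 ht)),
      Finset.sum_add_distrib]
  have hdsum : ∑ i ∈ Finset.range q, F (d + i) = ∑ i ∈ Finset.range q, F i + q • P := by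
    simp [Finset.sum_congr rfl fun i hi => (add_comm d i ▸ hd i (Finset.mem_range.1 hi)),
      Finset.sum_add_distrib]
  have htotal := Finset.sum_range_add F q d
  rw [add_comm q d, Finset.sum_range_add, hqsum, hdsum, ← add_assoc, ← add_assoc,
    add_comm (∑ i ∈ Finset.range q, F i)] at htotal
  exact (add_left_cancel htotal).symm

/-- The signed distance of `lα` to the nearest integer; its absolute value is the quantity `‖lα‖`
of Diophantine approximation. -/
def deviation (α : ℝ) (l : ℕ) : ℝ := l * α - round (l * α)

/-- `Q` is the first positive time at which the orbit of `0` under the rotation by `α` comes closer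
to `0` than at the earlier time `q`. Consecutive denominators of convergents have this property,
and it is all that the study of the words needs to know about them. -/
structure IsCloserReturn (α : ℝ) (q Q : ℕ) : Prop where
  pos : 0 < q
  lt : q < Q
  abs_deviation_le : ∀ l, 0 < l → l < Q → |deviation α q| ≤ |deviation α l|
  abs_deviation_lt : |deviation α Q| < |deviation α q|

namespace IsCloserReturn

variable {α : ℝ} {q Q : ℕ}

theorem abs_deviation_le_abs_sub (h : IsCloserReturn α q Q) {l : ℕ} (hl : 0 < l) (hlQ : l < Q)
    (M : ℤ) : |deviation α q| ≤ |l * α - M| :=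
  (h.abs_deviation_le l hl hlQ).trans (round_le _ M)

theorem deviation_ne_zero (h : IsCloserReturn α q Q) : deviation α q ≠ 0 :=
  abs_pos.1 ((abs_nonneg _).trans_lt h.abs_deviation_lt)

/-- Otherwise `dα - P` would be the fraction `d / q < 1` of the deviation of `qα`. -/
theorem natCast_mul_round_ne (h : IsCloserReturn α q Q) {d : ℕ} (hd : 0 < d) (hdq : d < q)
    (P : ℤ) : d * round (q * α) ≠ q * P := by
  intro heq
  have hscale : (q : ℝ) * (d * α - P) = d * deviation α q := by
    have : (d : ℝ) * round (q * α) = q * P := by exact_mod_cast heq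
    rw [deviation]
    linear_combination this
  have habs := congrArg abs hscale
  rw [abs_mul, abs_mul, Nat.abs_cast, Nat.abs_cast] at habs
  have hbest := h.abs_deviation_le_abs_sub hd (hdq.trans h.lt) P
  have hdq' : (d : ℝ) < q := by exact_mod_cast hdq
  nlinarith [abs_pos.2 h.deviation_ne_zero]

/-- Otherwise the time `Q - q` would come closer to `0` than `q` does. -/
theorem deviation_mul_deviation_neg (h : IsCloserReturn α q Q) (hQ : deviation α Q ≠ 0) :
    deviation α q * deviation α Q < 0 := by
  have hlt := h.lt
  have hdiff := h.abs_deviation_le_abs_sub (l := Q - q) (by omega) (by have := h.pos; omega)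
    (round (Q * α) - round (q * α))
  have hcast : ((Q - q : ℕ) : ℝ) * α - (round (Q * α) - round (q * α) : ℤ) =
      deviation α Q - deviation α q := by
    rw [deviation, deviation, Nat.cast_sub hlt.le]
    push_cast
    ring
  rw [hcast] at hdiff
  have hcross : 2 * (deviation α q * deviation α Q) ≤ |deviation α Q| * |deviation α Q| := by
    rw [abs_mul_abs_self]
    nlinarith [sq_le_sq.2 hdiff]
  by_contra! hnonneg
  rw [← abs_of_nonneg hnonneg, abs_mul] at hcross
  linarith [mul_lt_mul_of_pos_right h.abs_deviation_lt (abs_pos.2 hQ),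
    mul_nonneg (abs_nonneg (deviation α q)) (abs_nonneg (deviation α Q))]

theorem height_add (h : IsCloserReturn α q Q) (hirr : Irrational α) {l : ℕ} (hl : 0 < l)
    (hlQ : l < Q) : height α (l + q) = height α l + round (q * α) := by
  have hle := Int.floor_le ((l : ℝ) * α)
  have hlt := Int.lt_floor_add_one ((l : ℝ) * α)
  have hsum : ((l + q : ℕ) : ℝ) * α = l * α + deviation α q + round (q * α) := by
    rw [deviation]
    push_cast
    ring
  have hne : (l : ℝ) * α + deviation α q ≠ (⌊(l : ℝ) * α⌋ + 1 : ℤ) := fun heq =>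
    (hirr.natCast_mul (show l + q ≠ 0 by omega)).ne_int (⌊(l : ℝ) * α⌋ + 1 + round (q * α))
      (by rw [hsum, heq]; push_cast; ring)
  rw [height, hsum, Int.floor_add_intCast, add_left_inj, height, Int.floor_eq_iff]
  push_cast at hne
  rcases le_total 0 (deviation α q) with hpos | hneg
  · have hbest := h.abs_deviation_le_abs_sub hl hlQ (⌊(l : ℝ) * α⌋ + 1)
    push_cast at hbest
    rw [abs_of_nonneg hpos, abs_of_neg (by linarith)] at hbest
    exact ⟨by linarith, lt_of_le_of_ne (by linarith) hne⟩
  · have hbest := h.abs_deviation_le_abs_sub hl hlQ ⌊(l : ℝ) * α⌋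
    rw [abs_of_nonpos hneg, abs_of_nonneg (by linarith)] at hbest
    exact ⟨by linarith, by linarith⟩

theorem height_add_ne (h : IsCloserReturn α q Q) (hirr : Irrational α) :
    height α (Q + q) ≠ height α Q + round (q * α) := by
  have hQ : (Q : ℝ) * α = deviation α Q + round (Q * α) := by rw [deviation]; ring
  have hsum : ((Q + q : ℕ) : ℝ) * α =
      deviation α Q + deviation α q + round (Q * α) + round (q * α) := by
    rw [deviation, deviation]
    push_cast
    ring
  have hdev : deviation α Q ≠ 0 := sub_ne_zero.2
    ((hirr.natCast_mul (h.pos.trans h.lt).ne').ne_int _)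
  have hfloor : ⌊deviation α Q + deviation α q⌋ ≠ ⌊deviation α Q⌋ := by
    have hlt := h.abs_deviation_lt
    rcases mul_neg_iff.1 (h.deviation_mul_deviation_neg hdev) with ⟨hq, hQ⟩ | ⟨hq, hQ⟩
    · rw [abs_of_neg hQ, abs_of_pos hq] at hlt
      have hsum_nonneg : 0 ≤ ⌊deviation α Q + deviation α q⌋ := Int.floor_nonneg.2 (by linarith)
      have hQ_neg : ⌊deviation α Q⌋ < 0 := Int.floor_lt.2 (by simpa using hQ)
      exact (hQ_neg.trans_le hsum_nonneg).ne'
    · rw [abs_of_pos hQ, abs_of_neg hq] at hlt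
      have hsum_neg : ⌊deviation α Q + deviation α q⌋ < 0 :=
        Int.floor_lt.2 (by push_cast; linarith)
      exact (hsum_neg.trans_le (Int.floor_nonneg.2 hQ.le)).ne
  rw [height, hsum, Int.floor_add_intCast, Int.floor_add_intCast, height]
  nth_rewrite 2 [hQ]
  rw [Int.floor_add_intCast]
  simpa using hfloor

variable {m m' n : ℕ}

theorem word_add (h : IsCloserReturn α q Q) (hirr : Irrational α) (hα : α ∈ Set.Icc (0 : ℝ) 1)
    (hm : m + n + 1 < Q) : word α (m + q) n = word α m n := by
  rw [word_eq_word_iff_height hα]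
  intro i hi
  rw [show m + q + 1 + i = m + 1 + i + q by ring, show m + q + 1 = m + 1 + q by ring,
    h.height_add hirr (by omega) (by omega), h.height_add hirr (by omega) (by omega)]
  ring

theorem word_mod (h : IsCloserReturn α q Q) (hirr : Irrational α) (hα : α ∈ Set.Icc (0 : ℝ) 1)
    (hm : m + n + 1 < q + Q) : word α (m % q) n = word α m n := by
  induction m using Nat.strong_induction_on with
  | _ m ih =>
    rcases lt_or_ge m q with hmq | hmq
    · rw [Nat.mod_eq_of_lt hmq]
    · obtain ⟨r, rfl⟩ := Nat.exists_eq_add_of_le' hmq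
      have hq := h.pos
      rw [Nat.add_mod_right, ih r (by omega) (by omega), h.word_add hirr hα (by omega)]

theorem word_injOn_Iio (h : IsCloserReturn α q Q) (hirr : Irrational α)
    (hα : α ∈ Set.Icc (0 : ℝ) 1) (hn : q ≤ n) : Set.InjOn (word α · n) (Set.Iio q) := by
  intro m hm m' hm' hw
  wlog hle : m ≤ m' generalizing m m'
  · exact (this hm' hm hw.symm (le_of_not_ge hle)).symm
  by_contra hne
  obtain ⟨d, rfl⟩ := Nat.exists_eq_add_of_le hle
  rw [Set.mem_Iio] at hm'
  have hlt := h.lt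
  have hd : 0 < d := by omega
  have hincr := (word_eq_word_iff_height hα).1 hw
  set P : ℤ := height α (m + d + 1) - height α (m + 1)
  have hperiods : d • round (q * α) = q • P := by
    refine nsmul_eq_nsmul_of_quasiperiods (F := fun i => height α (m + 1 + i)) ?_ ?_
    · intro t ht
      simp only [← add_assoc]
      exact h.height_add hirr (by omega) (by omega)
    · intro i hi
      have := hincr i (by omega)
      rw [show m + 1 + (i + d) = m + d + 1 + i by ring]
      omega
  exact h.natCast_mul_round_ne hd (by omega) P (by simpa using hperiods)

/-- The window at `m'` sees the failure of the quasi-period `q` at `Q`; an earlier window would see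
it at the same place, which for that window lies before `Q`. -/
theorem word_ne_of_lt (h : IsCloserReturn α q Q) (hirr : Irrational α)
    (hα : α ∈ Set.Icc (0 : ℝ) 1) (hlt : m < m') (hm' : m' < Q) (hn : q + Q ≤ m' + n + 1) :
    word α m n ≠ word α m' n := by
  intro hw
  rw [word_eq_word_iff_height hα] at hw
  obtain ⟨i, rfl⟩ : ∃ i, Q = m' + 1 + i := ⟨Q - (m' + 1), by omega⟩
  have hnear := hw i (by omega)
  have hfar := hw (i + q) (by omega)
  rw [← add_assoc, ← add_assoc, h.height_add hirr (by omega) (by omega)] at hfar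
  have := h.height_add_ne hirr
  omega

theorem word_eq_word_iff (h : IsCloserReturn α q Q) (hirr : Irrational α)
    (hα : α ∈ Set.Icc (0 : ℝ) 1) (hn : q ≤ n) (hm : m < Q) (hm' : m' < Q) :
    word α m n = word α m' n ↔
      m = m' ∨ (m + n + 1 < q + Q ∧ m' + n + 1 < q + Q ∧ m ≡ m' [MOD q]) := by
  constructor
  · intro hw
    by_cases hlow : m + n + 1 < q + Q ∧ m' + n + 1 < q + Q
    · rw [← h.word_mod hirr hα hlow.1, ← h.word_mod hirr hα hlow.2] at hw
      exact Or.inr ⟨hlow.1, hlow.2, h.word_injOn_Iio hirr hα hn (Nat.mod_lt _ h.pos)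
        (Nat.mod_lt _ h.pos) hw⟩
    · left
      by_contra hne
      rcases lt_or_gt_of_ne hne with hlt | hlt
      · exact h.word_ne_of_lt hirr hα hlt hm' (by omega) hw
      · exact h.word_ne_of_lt hirr hα hlt hm (by omega) hw.symm
  · rintro (rfl | ⟨hlow, hlow', hmod⟩)
    · rfl
    · rw [← h.word_mod hirr hα hlow, ← h.word_mod hirr hα hlow', hmod]

theorem word_injOn (h : IsCloserReturn α q Q) (hirr : Irrational α) (hα : α ∈ Set.Icc (0 : ℝ) 1)
    (hn : q ≤ n) :
    Set.InjOn (word α · n) (Set.Ico 0 q ∪ Set.Ico (q + Q - 1 - n) Q) := by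
  intro s hs t ht hst
  have hlt := h.lt
  simp only [Set.mem_union, Set.mem_Ico] at hs ht
  rcases (h.word_eq_word_iff hirr hα hn (by omega) (by omega)).1 hst with heq | ⟨hs', ht', hmod⟩
  · exact heq
  · exact hmod.eq_of_lt_of_lt (by omega) (by omega)

theorem setOf_factor_eq_image (h : IsCloserReturn α q Q) (hirr : Irrational α)
    (hα : α ∈ Set.Icc (0 : ℝ) 1) (hn : q ≤ n) (hnQ : n < Q) :
    {w : List Bool | w.length = n ∧ IsFactor α w} =
      (word α · n) '' (Set.Ico 0 q ∪ Set.Ico (q + Q - 1 - n) Q) := by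
  ext w
  constructor
  · rintro ⟨rfl, m, hw⟩
    set S := Finset.Ico 0 q ∪ Finset.Ico (q + Q - 1 - w.length) Q with hS
    have hcoe : (S : Set ℕ) = Set.Ico 0 q ∪ Set.Ico (q + Q - 1 - w.length) Q := by
      rw [hS, Finset.coe_union, Finset.coe_Ico, Finset.coe_Ico]
    have hdisj : Disjoint (Finset.Ico 0 q) (Finset.Ico (q + Q - 1 - w.length) Q) := by
      rw [Finset.disjoint_left]
      intro s hs
      rw [Finset.mem_Ico] at hs ⊢
      omega
    have hcard : w.length < S.card := by
      rw [hS, Finset.card_union_of_disjoint hdisj, Nat.card_Ico, Nat.card_Ico]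
      omega
    obtain ⟨s, hs, hsm⟩ := exists_mem_word_eq_of_injOn hα hcard
      (hcoe ▸ h.word_injOn hirr hα hn) m
    exact ⟨s, hcoe ▸ Finset.mem_coe.2 hs, hsm.trans hw.symm⟩
  · rintro ⟨s, -, rfl⟩
    exact ⟨length_word α s n, isFactor_word α s n⟩

theorem exhaust_eq (h : IsCloserReturn α q Q) (hirr : Irrational α) (hα : α ∈ Set.Icc (0 : ℝ) 1)
    (hn : q ≤ n) (hnQ : n < Q) : exhaust α n = Q + n - 1 := by
  have hpos := h.pos
  apply IsLeast.csInf_eq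
  constructor
  · intro w hw hfactor
    obtain ⟨s, hs, rfl⟩ := (h.setOf_factor_eq_image hirr hα hn hnQ).subset ⟨hw, hfactor⟩
    simp only [Set.mem_union, Set.mem_Ico] at hs
    exact ⟨s, by rw [length_word]; omega, by rw [length_word]⟩
  · intro N hN
    obtain ⟨m, hmN, hm⟩ := hN _ (length_word α (Q - 1) n) (isFactor_word α (Q - 1) n)
    rw [length_word] at hmN hm
    by_contra hlt
    rw [h.word_eq_word_iff hirr hα hn (by omega) (by omega)] at hm
    omega

theorem occCount_word (h : IsCloserReturn α q Q) (hirr : Irrational α)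
    (hα : α ∈ Set.Icc (0 : ℝ) 1) (hn : q ≤ n) (hnQ : n < Q) (s : ℕ) :
    occCount α (word α s n) (exhaust α n) =
      ((Finset.range Q).filter (fun m => word α m n = word α s n)).card := by
  have hpos := h.pos
  rw [occCount, h.exhaust_eq hirr hα hn hnQ]
  congr 1
  ext m
  simp only [length_word, Finset.mem_filter, Finset.mem_range, ← and_assoc]
  exact and_congr_left fun _ => by omega

theorem occCount_word_of_mem_Ico (h : IsCloserReturn α q Q) (hirr : Irrational α)
    (hα : α ∈ Set.Icc (0 : ℝ) 1) (hn : q ≤ n) (hnQ : n < Q) {s : ℕ}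
    (hs : s ∈ Set.Ico (q + Q - 1 - n) Q) : occCount α (word α s n) (exhaust α n) = 1 := by
  obtain ⟨hs, hsQ⟩ := hs
  rw [h.occCount_word hirr hα hn hnQ, Finset.card_eq_one]
  refine ⟨s, ?_⟩
  ext m
  simp only [Finset.mem_filter, Finset.mem_range, Finset.mem_singleton]
  constructor
  · rintro ⟨hm, hw⟩
    rw [h.word_eq_word_iff hirr hα hn hm hsQ] at hw
    omega
  · rintro rfl
    exact ⟨hsQ, rfl⟩

theorem occCount_word_of_lt (h : IsCloserReturn α q Q) (hirr : Irrational α)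
    (hα : α ∈ Set.Icc (0 : ℝ) 1) (hn : q ≤ n) (hnQ : n < Q) {s : ℕ} (hs : s < q) :
    occCount α (word α s n) (exhaust α n) =
      (q + Q - 1 - n) / q + if s < (q + Q - 1 - n) % q then 1 else 0 := by
  have hlt := h.lt
  have hcount := Nat.count_modEq_card (q + Q - 1 - n) h.pos s
  rw [Nat.mod_eq_of_lt hs, Nat.count_eq_card_filter_range] at hcount
  rw [h.occCount_word hirr hα hn hnQ, ← hcount]
  congr 1
  ext m
  simp only [Finset.mem_filter, Finset.mem_range]
  constructor
  · rintro ⟨hm, hw⟩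
    rcases (h.word_eq_word_iff hirr hα hn hm (by omega)).1 hw with rfl | ⟨hlow, -, hmod⟩
    · exact ⟨by omega, rfl⟩
    · exact ⟨by omega, hmod⟩
  · rintro ⟨hm, hmod⟩
    exact ⟨by omega, (h.word_eq_word_iff hirr hα hn (by omega) (by omega)).2
      (Or.inr ⟨by omega, by omega, hmod⟩)⟩

end IsCloserReturn

section Convergents

variable {α : ℝ}

/-- The numerators of the convergents, indexed like `qd`: `pn α (n+1)` is `p_n`. -/
def pn (α : ℝ) : ℕ → ℤ
  | 0 => 1
  | 1 => 0
  | (n+2) => pq α n * pn α (n+1) + pn α n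

/-- The signed approximation error `qα - p` of a convergent, indexed like `qd`. -/
def err (α : ℝ) (k : ℕ) : ℝ := qd α k * α - pn α k

theorem iterate_gaussMap_mem_Ioo (hirr : Irrational α) (hα : α ∈ Set.Ioo (0 : ℝ) 1) (k : ℕ) :
    gaussMap^[k] α ∈ Set.Ioo (0 : ℝ) 1 := by
  cases k with
  | zero => exact hα
  | succ k =>
    have hne := (irrational_iterate_gaussMap hirr (k + 1)).ne_zero
    rw [Function.iterate_succ_apply'] at hne ⊢
    exact ⟨(Int.fract_nonneg _).lt_of_ne hne.symm, Int.fract_lt_one _⟩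

theorem iterate_gaussMap_succ (hirr : Irrational α) (hα : α ∈ Set.Ioo (0 : ℝ) 1) (k : ℕ) :
    gaussMap^[k + 1] α = (gaussMap^[k] α)⁻¹ - pq α k := by
  have hpos := (iterate_gaussMap_mem_Ioo hirr hα k).1
  rw [Function.iterate_succ_apply', gaussMap, pq, ← Int.self_sub_floor,
    natCast_floor_eq_intCast_floor (inv_nonneg.2 hpos.le)]

theorem one_le_pq (hirr : Irrational α) (hα : α ∈ Set.Ioo (0 : ℝ) 1) (k : ℕ) : 1 ≤ pq α k := by
  obtain ⟨hpos, hlt⟩ := iterate_gaussMap_mem_Ioo hirr hα k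
  exact Nat.le_floor (by simpa using (one_le_inv₀ hpos).2 hlt.le)

theorem qd_add_qd_le (hirr : Irrational α) (hα : α ∈ Set.Ioo (0 : ℝ) 1) (k : ℕ) :
    qd α (k + 1) + qd α k ≤ qd α (k + 2) :=
  Nat.add_le_add_right (Nat.le_mul_of_pos_left _ (one_le_pq hirr hα k)) _

theorem qd_le_qd_succ (hirr : Irrational α) (hα : α ∈ Set.Ioo (0 : ℝ) 1) (k : ℕ) :
    qd α k ≤ qd α (k + 1) := by
  cases k with
  | zero => simp [qd]
  | succ k => exact (Nat.le_add_right _ _).trans (qd_add_qd_le hirr hα k)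

theorem qd_succ_pos (hirr : Irrational α) (hα : α ∈ Set.Ioo (0 : ℝ) 1) (k : ℕ) :
    0 < qd α (k + 1) :=
  monotone_nat_of_le_succ (qd_le_qd_succ hirr hα) (Nat.le_add_left 1 k)

theorem err_succ (hirr : Irrational α) (hα : α ∈ Set.Ioo (0 : ℝ) 1) (k : ℕ) :
    err α (k + 1) = -(gaussMap^[k] α) * err α k := by
  induction k with
  | zero => simp [err, qd, pn]
  | succ k ih =>
    have hpos := (iterate_gaussMap_mem_Ioo hirr hα k).1
    have hrec : err α (k + 2) = pq α k * err α (k + 1) + err α k := by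
      simp only [err, qd, pn]
      push_cast
      ring
    rw [hrec, iterate_gaussMap_succ hirr hα, ih]
    field_simp
    ring

theorem err_mul_err_succ_nonpos (hirr : Irrational α) (hα : α ∈ Set.Ioo (0 : ℝ) 1) (k : ℕ) :
    err α k * err α (k + 1) ≤ 0 := by
  rw [err_succ hirr hα]
  nlinarith [mul_nonneg (iterate_gaussMap_mem_Ioo hirr hα k).1.le (sq_nonneg (err α k))]

theorem err_ne_zero (hirr : Irrational α) (hα : α ∈ Set.Ioo (0 : ℝ) 1) (k : ℕ) :
    err α k ≠ 0 := by
  induction k with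
  | zero => simp [err, qd, pn]
  | succ k ih =>
    rw [err_succ hirr hα]
    exact mul_ne_zero (neg_ne_zero.2 (iterate_gaussMap_mem_Ioo hirr hα k).1.ne') ih

theorem abs_err_succ_lt (hirr : Irrational α) (hα : α ∈ Set.Ioo (0 : ℝ) 1) (k : ℕ) :
    |err α (k + 1)| < |err α k| := by
  obtain ⟨hpos, hlt⟩ := iterate_gaussMap_mem_Ioo hirr hα k
  rw [err_succ hirr hα, abs_mul, abs_neg, abs_of_pos hpos]
  exact mul_lt_of_lt_one_left (abs_pos.2 (err_ne_zero hirr hα k)) hlt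

theorem qd_mul_pn_succ_sub (α : ℝ) (k : ℕ) :
    (qd α k : ℤ) * pn α (k + 1) - qd α (k + 1) * pn α k = (-1) ^ (k + 1) := by
  induction k with
  | zero => simp [qd, pn]
  | succ k ih =>
    rw [pow_succ, ← ih]
    simp only [qd, pn]
    push_cast
    ring

/-- In the basis `(q, p)`, `(Q, P)` of `ℤ²`, a vector `(l, M)` with `0 < l < Q` has coordinates
`x ≠ 0` and `y` of opposite signs, so the errors in `lα - M = x(qα - p) + y(Qα - P)` add up. -/
theorem abs_sub_le_abs_sub_of_isUnit_det {q Q p P l : ℤ} (hq : 0 ≤ q)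
    (hdet : IsUnit (q * P - Q * p)) (hsign : (q * α - p) * (Q * α - P) ≤ 0) (hl : 0 < l)
    (hlQ : l < Q) (M : ℤ) : |q * α - p| ≤ |l * α - M| := by
  have hunit := Int.isUnit_mul_self hdet
  set u := q * P - Q * p with hu
  obtain ⟨x, y, hlxy, hMxy⟩ : ∃ x y : ℤ, l = x * q + y * Q ∧ M = x * p + y * P := by
    refine ⟨u * (l * P - Q * M), u * (q * M - l * p), ?_, ?_⟩
    · linear_combination (-l) * hunit + u * l * hu
    · linear_combination (-M) * hunit + u * M * hu
  have hx : x ≠ 0 := by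
    rintro rfl
    rcases le_or_gt y 0 with hy | hy <;> nlinarith
  have hxy : x * y ≤ 0 := by
    by_contra! hpos
    rcases pos_and_pos_or_neg_and_neg_of_mul_pos hpos with ⟨hx, hy⟩ | ⟨hx, hy⟩ <;> nlinarith
  have hsplit : (l : ℝ) * α - M = x * (q * α - p) + y * (Q * α - P) := by
    rw [hlxy, hMxy]
    push_cast
    ring
  have hxsq : (1 : ℝ) ≤ x ^ 2 := by
    exact_mod_cast (one_le_sq_iff_one_le_abs x).2 (Int.one_le_abs hx)
  have hcross : 0 ≤ ((x * y : ℤ) : ℝ) * ((q * α - p) * (Q * α - P)) :=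
    mul_nonneg_of_nonpos_of_nonpos (by exact_mod_cast hxy) hsign
  rw [hsplit, ← sq_le_sq]
  push_cast at hcross
  nlinarith [mul_nonneg (sub_nonneg.2 hxsq) (sq_nonneg (q * α - p)), sq_nonneg (y * (Q * α - P))]

theorem abs_err_le_abs_sub (hirr : Irrational α) (hα : α ∈ Set.Ioo (0 : ℝ) 1) {k l : ℕ}
    (hl : 0 < l) (hlk : l < qd α (k + 1)) (M : ℤ) : |err α k| ≤ |l * α - M| := by
  have hdet : IsUnit ((qd α k : ℤ) * pn α (k + 1) - qd α (k + 1) * pn α k) := by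
    rw [qd_mul_pn_succ_sub]
    exact isUnit_one.neg.pow _
  have hsign := err_mul_err_succ_nonpos hirr hα k
  exact_mod_cast abs_sub_le_abs_sub_of_isUnit_det (l := l) (Int.natCast_nonneg _) hdet
    (by exact_mod_cast hsign) (by exact_mod_cast hl) (by exact_mod_cast hlk) M

theorem isCloserReturn_qd (hirr : Irrational α) (hα : α ∈ Set.Ioo (0 : ℝ) 1) {k : ℕ}
    (hlt : qd α (k + 1) < qd α (k + 2)) : IsCloserReturn α (qd α (k + 1)) (qd α (k + 2)) where
  pos := qd_succ_pos hirr hα k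
  lt := hlt
  abs_deviation_le _ hl hlQ :=
    (round_le _ (pn α (k + 1))).trans (abs_err_le_abs_sub hirr hα hl hlQ _)
  abs_deviation_lt := calc
    |deviation α (qd α (k + 2))| ≤ |err α (k + 2)| := round_le _ _
    _ < |err α (k + 1)| := abs_err_succ_lt hirr hα (k + 1)
    _ ≤ |deviation α (qd α (k + 1))| :=
      abs_err_le_abs_sub hirr hα (qd_succ_pos hirr hα k) hlt _

end Convergents

theorem factor_classification_general {α : ℝ} (hirr : Irrational α) (hα : α ∈ Set.Icc (0 : ℝ) 1)
    {q Q n a r : ℕ} (h : IsCloserReturn α q Q) (hn : q ≤ n) (hnQ : n < Q) (hr : r < q)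
    (hdiv : q + Q - 1 - n = r + q * a) :
    ∃ A B C : Set (List Bool),
      A = {w : List Bool | w.length = n ∧ IsFactor α w ∧ OccursIn α w (r + n - 1)} ∧
      (∀ w : List Bool, (w.length = n ∧ IsFactor α w) ↔ (w ∈ A ∨ w ∈ B ∨ w ∈ C)) ∧
      Disjoint A B ∧ Disjoint A C ∧ Disjoint B C ∧
      A.ncard = r ∧ B.ncard = q - r ∧ C.ncard = n + 1 - q ∧
      (∀ w ∈ A, occCount α w (exhaust α n) = a + 1) ∧
      (∀ w ∈ B, occCount α w (exhaust α n) = a) ∧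
      (∀ w ∈ C, occCount α w (exhaust α n) = 1) := by
  have hpos := h.pos
  have hunion : Set.Ico 0 q = Set.Ico 0 r ∪ Set.Ico r q :=
    (Set.Ico_union_Ico_eq_Ico (Nat.zero_le r) hr.le).symm
  have hinj := h.word_injOn hirr hα hn
  have hfactors := h.setOf_factor_eq_image hirr hα hn hnQ
  rw [hunion, Set.image_union, Set.image_union, Set.union_assoc] at hfactors
  rw [hunion, Set.union_assoc] at hinj
  have hA := Set.subset_union_left (s := Set.Ico 0 r) (t := Set.Ico r q ∪ Set.Ico (q + Q - 1 - n) Q)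
  have hC : Set.Ico (q + Q - 1 - n) Q ⊆ Set.Ico 0 r ∪ (Set.Ico r q ∪ Set.Ico (q + Q - 1 - n) Q) :=
    Set.subset_union_right.trans Set.subset_union_right
  have hB : Set.Ico r q ⊆ Set.Ico 0 r ∪ (Set.Ico r q ∪ Set.Ico (q + Q - 1 - n) Q) :=
    Set.subset_union_left.trans Set.subset_union_right
  obtain ⟨hquot, hrem⟩ := (Nat.div_mod_unique hpos).2 ⟨hdiv.symm, hr⟩
  have hocc {s : ℕ} (hs : s < q) := h.occCount_word_of_lt hirr hα hn hnQ hs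
  rw [hquot, hrem] at hocc
  refine ⟨_, (word α · n) '' Set.Ico r q, (word α · n) '' Set.Ico (q + Q - 1 - n) Q, rfl, ?_⟩
  rw [setOf_factor_occursIn_eq_image, show r + n - 1 + 1 - n = r by omega]
  refine ⟨fun w => Set.ext_iff.1 hfactors w,
    (Set.Ico_disjoint_Ico.2 (by omega)).image hinj hA hB,
    (Set.Ico_disjoint_Ico.2 (by omega)).image hinj hA hC,
    (Set.Ico_disjoint_Ico.2 (by omega)).image hinj hB hC, ?_, ?_, ?_,
    Set.forall_mem_image.2 fun s hs => ?_, Set.forall_mem_image.2 fun s hs => ?_,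
    Set.forall_mem_image.2 fun s => h.occCount_word_of_mem_Ico hirr hα hn hnQ⟩
  · rw [(hinj.mono hA).ncard_image, Set.ncard_Ico_nat, Nat.sub_zero]
  · rw [(hinj.mono hB).ncard_image, Set.ncard_Ico_nat]
  · rw [(hinj.mono hC).ncard_image, Set.ncard_Ico_nat]
    omega
  · rw [hocc (hs.2.trans hr), if_pos hs.2]
  · rw [hocc hs.2, if_neg hs.1.not_gt, add_zero]

/-- For `n = q_k + j` (`k ≥ 1`, `0 ≤ j ≤ q_{k-1} - 1`, `n ≥ 2`), the
`n + 1` factors of `v₀` of length `n` split into three disjoint classes `A, B, C`: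
`A` consists of the `q_{k-1} - 1 - j` factors occurring in
`(v₀(1), …, v₀(q_k + q_{k-1} - 2))`, each of which occurs exactly `a_{k+1} + 1` times in
`(v₀(1), …, v₀(f(n)))`; the `q_k - q_{k-1} + 1 + j` factors of `B` occur there exactly
`a_{k+1}` times, and the `j + 1` factors of `C` occur there exactly once.
(Here `qd α (k+1) = q_k`, `qd α k = q_{k-1}`, `pq α k = a_{k+1}`.) -/
theorem factor_classification (α : ℝ) (hirr : Irrational α) (h0 : 0 < α) (h1 : α < 1)
    (k j n : ℕ) (hk : 1 ≤ k) (hj : j ≤ qd α k - 1) (hn : n = qd α (k + 1) + j)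
    (hn2 : 2 ≤ n) :
    ∃ A B C : Set (List Bool),
      A = {w : List Bool | w.length = n ∧ IsFactor α w ∧
            OccursIn α w (qd α (k + 1) + qd α k - 2)} ∧
      (∀ w : List Bool, (w.length = n ∧ IsFactor α w) ↔ (w ∈ A ∨ w ∈ B ∨ w ∈ C)) ∧
      Disjoint A B ∧ Disjoint A C ∧ Disjoint B C ∧
      A.ncard = qd α k - 1 - j ∧
      B.ncard = qd α (k + 1) - qd α k + 1 + j ∧
      C.ncard = j + 1 ∧
      (∀ w ∈ A, occCount α w (exhaust α n) = pq α k + 1) ∧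
      (∀ w ∈ B, occCount α w (exhaust α n) = pq α k) ∧
      (∀ w ∈ C, occCount α w (exhaust α n) = 1) := by
  have hα : α ∈ Set.Ioo (0 : ℝ) 1 := ⟨h0, h1⟩
  have hpos : 0 < qd α k := Nat.sub_add_cancel hk ▸ qd_succ_pos hirr hα (k - 1)
  have hle := qd_le_qd_succ hirr hα k
  have hadd := qd_add_qd_le hirr hα k
  have hdiv : qd α (k + 1) + qd α (k + 2) - 1 - n =
      (qd α k - 1 - j) + qd α (k + 1) * pq α k := by
    rw [qd, mul_comm]
    omega
  have hgen := factor_classification_general hirr (Set.Ioo_subset_Icc_self hα)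
    (isCloserReturn_qd hirr hα (by omega)) (by omega) (by omega) (by omega) hdiv
  rwa [show qd α k - 1 - j + n - 1 = qd α (k + 1) + qd α k - 2 by omega,
    show qd α (k + 1) - (qd α k - 1 - j) = qd α (k + 1) - qd α k + 1 + j by omega,
    show n + 1 - qd α (k + 1) = j + 1 by omega] at hgen

end
end
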